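/- arXiv:2209.05028 — 3 statements merged into one kernel-verified Lean document; each statement's English description precedes it below -/
import Mathlib

section
/- In the multinomial assignment setting, write p_n = n^{-2} and suppose m(n)·p_n = c·n^{-a}·(1+o(1)) for some constant c > 0, where a = 1/k for some integer k ≥ 2. Then (k−1)·n·(1+o(1)) ≤ E[max_{σ ∈ S_n} Σ_{i=1}^n X_{iσ(i)}] ≤ k·n·(1+o(1)); that is, liminf_{n→∞} E[max_σ Σ_i X_{iσ(i)}]/n ≥ k−1 and limsup_{n→∞} E[max_σ Σ_i X_{iσ(i)}]/n ≤ k. -/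
/-!
Write `λ = m(n) / n²` for the mean number of points in a cell.

For the upper bound, `x ≤ k + C(x, k + 1)` for natural numbers `x`, so every permutation collects
at most `k n` plus the sum of `C(X_{ij}, k + 1)` over the whole grid, whose mean is at most
`n² λ^(k+1) = o(n)`.

For the lower bound, join row `i` to column `j` when `X_{ij} ≥ r`. Since `n λ^r → ∞` and `λ → 0`,
the expected degrees in this random bipartite graph are close to a common `d → ∞`, and any two of
the events `X_{ij} ≥ r` are almost negatively correlated, so the degrees deviate from `d` by `o(d)`
on average. Dividing each edge by `d` plus the deviations of its two end degrees gives a fractional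
matching, which is dominated entrywise by a doubly stochastic matrix. By Birkhoff's theorem there
is then a matching of expected size at least `n - o(n)`, and each of its edges contributes at
least `r`.
-/

open MeasureTheory Filter Real

noncomputable section

/-- The uniform measure on the `n × n` grid of cells. -/
def cellMeasure (n : ℕ) : Measure (Fin n × Fin n) :=
  ((n : ENNReal) ^ 2)⁻¹ • Measure.count

/-- The law of `m` i.i.d. points, each uniformly distributed on the `n × n` grid;
under this measure the matrix of cell counts is multinomial `M(m, n²)`. -/
def gridMeasure (m n : ℕ) : Measure (Fin m → Fin n × Fin n) :=
  Measure.pi fun _ => cellMeasure n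

/-- `X_{ij}`: the number of the `m` points falling in cell `(i, j)`. -/
def cellCount {m n : ℕ} (i j : Fin n) (ω : Fin m → Fin n × Fin n) : ℕ :=
  (Finset.univ.filter fun k => ω k = (i, j)).card

/-- The assignment sum `S(σ) = ∑ i, X_{i σ(i)}`. -/
def assignSum {m n : ℕ} (σ : Equiv.Perm (Fin n)) (ω : Fin m → Fin n × Fin n) : ℝ :=
  ∑ i, (cellCount i (σ i) ω : ℝ)

/-- `max_{σ ∈ S_n} S(σ)`. -/
def maxAssign {m n : ℕ} (ω : Fin m → Fin n × Fin n) : ℝ :=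
  ⨆ σ : Equiv.Perm (Fin n), assignSum σ ω

/-- `min_{σ ∈ S_n} S(σ)`. -/
def minAssign {m n : ℕ} (ω : Fin m → Fin n × Fin n) : ℝ :=
  ⨅ σ : Equiv.Perm (Fin n), assignSum σ ω

/-- `E[max_{σ ∈ S_n} S(σ)]`. -/
def EmaxAssign (m n : ℕ) : ℝ :=
  ∫ ω, maxAssign ω ∂(gridMeasure m n)

/-- `E[min_{σ ∈ S_n} S(σ)]`. -/
def EminAssign (m n : ℕ) : ℝ :=
  ∫ ω, minAssign ω ∂(gridMeasure m n)

section Assignment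

variable {ι R : Type*} [Fintype ι] [Field R] [LinearOrder R] [IsStrictOrderedRing R]

lemma sum_mul_le_of_mem_doublyStochastic [DecidableEq ι] {D : Matrix ι ι R}
    (hD : D ∈ doublyStochastic R ι) {x : ι → ι → R} {M : R}
    (hM : ∀ σ : Equiv.Perm ι, ∑ i, x i (σ i) ≤ M) :
    ∑ i, ∑ j, D i j * x i j ≤ M := by
  have hlin : IsLinearMap R fun D : Matrix ι ι R => ∑ i, ∑ j, D i j * x i j :=
    { map_add := fun A B => by simp [add_mul, Finset.sum_add_distrib]
      map_smul := fun a A => by simp [Finset.mul_sum, mul_assoc] }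
  refine convexHull_min ?_ (convex_halfSpace_le hlin M)
    (doublyStochastic_eq_convexHull_permMatrix.subset hD)
  rintro _ ⟨σ, rfl⟩
  simpa [Equiv.Perm.permMatrix, PEquiv.toMatrix_apply] using hM σ

lemma exists_mem_doublyStochastic_ge [DecidableEq ι] {W : ι → ι → R}
    (hW : ∀ i j, 0 ≤ W i j) (hrow : ∀ i, ∑ j, W i j ≤ 1) (hcol : ∀ j, ∑ i, W i j ≤ 1) :
    ∃ D ∈ doublyStochastic R ι, ∀ i j, W i j ≤ D i j := by
  -- The row defects `a` and the column defects `b` have the same total `s`, so adding their outer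
  -- product divided by `s` tops every row and column sum up to one.
  set a : ι → R := fun i => 1 - ∑ j, W i j with ha_def
  set b : ι → R := fun j => 1 - ∑ i, W i j with hb_def
  have ha : ∀ i, 0 ≤ a i := fun i => sub_nonneg.2 (hrow i)
  have hb : ∀ j, 0 ≤ b j := fun j => sub_nonneg.2 (hcol j)
  obtain ⟨s, hsa⟩ : ∃ s, ∑ i, a i = s := ⟨_, rfl⟩
  have hsb : ∑ j, b j = s := by
    simp only [← hsa, ha_def, hb_def, Finset.sum_sub_distrib]
    rw [Finset.sum_comm]
  have hs : 0 ≤ s := hsa ▸ Finset.sum_nonneg fun i _ => ha i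
  have has : ∀ i, s = 0 → a i = 0 := fun i h =>
    (Finset.sum_eq_zero_iff_of_nonneg fun i _ => ha i).1 (hsa.trans h) i (Finset.mem_univ i)
  have hbs : ∀ j, s = 0 → b j = 0 := fun j h =>
    (Finset.sum_eq_zero_iff_of_nonneg fun j _ => hb j).1 (hsb.trans h) j (Finset.mem_univ j)
  have hle : ∀ i j, W i j ≤ W i j + a i * b j / s := fun i j =>
    le_add_of_nonneg_right (div_nonneg (mul_nonneg (ha i) (hb j)) hs)
  refine ⟨fun i j => W i j + a i * b j / s, mem_doublyStochastic_iff_sum.2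
    ⟨fun i j => (hW i j).trans (hle i j), fun i => ?_, fun j => ?_⟩, hle⟩
  · rw [Finset.sum_add_distrib, ← Finset.sum_div, ← Finset.mul_sum, hsb,
      mul_div_cancel_of_imp (has i)]
    exact add_sub_cancel _ _
  · rw [Finset.sum_add_distrib, ← Finset.sum_div, ← Finset.sum_mul, hsa,
      mul_div_cancel_left_of_imp (hbs j)]
    exact add_sub_cancel _ _

lemma sum_mul_le_of_sum_le_one {W : ι → ι → R} (hW : ∀ i j, 0 ≤ W i j)
    (hrow : ∀ i, ∑ j, W i j ≤ 1) (hcol : ∀ j, ∑ i, W i j ≤ 1)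
    {x : ι → ι → R} (hx : ∀ i j, 0 ≤ x i j) {M : R}
    (hM : ∀ σ : Equiv.Perm ι, ∑ i, x i (σ i) ≤ M) :
    ∑ i, ∑ j, W i j * x i j ≤ M := by
  classical
  obtain ⟨D, hD, hWD⟩ := exists_mem_doublyStochastic_ge hW hrow hcol
  calc ∑ i, ∑ j, W i j * x i j ≤ ∑ i, ∑ j, D i j * x i j := by
        gcongr with i _ j _
        exacts [hx i j, hWD i j]
    _ ≤ M := sum_mul_le_of_mem_doublyStochastic hD hM

lemma sum_div_add_add_le_one {f : ι → R} (hf : ∀ j, 0 ≤ f j) {d a : R} (hd : 0 < d) (ha : 0 ≤ a)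
    {b : ι → R} (hb : ∀ j, 0 ≤ b j) (hsum : ∑ j, f j ≤ d + a) :
    ∑ j, f j / (d + a + b j) ≤ 1 := by
  have hda : 0 < d + a := by positivity
  calc ∑ j, f j / (d + a + b j) ≤ ∑ j, f j / (d + a) := by
        exact Finset.sum_le_sum fun j _ =>
          div_le_div_of_nonneg_left (hf j) hda (le_add_of_nonneg_right (hb j))
    _ ≤ 1 := by rw [← Finset.sum_div]; exact div_le_one_of_le₀ hsum hda.le

omit [Fintype ι] in
lemma one_le_div_add_add {d a b : R} (hd : 0 < d) (ha : 0 ≤ a) (hb : 0 ≤ b) :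
    1 ≤ d / (d + a + b) + a / (d + a) + b / (d + b) := by
  calc 1 = d / (d + a + b) + a / (d + a + b) + b / (d + a + b) := by
        rw [← add_div, ← add_div, div_self (by positivity)]
    _ ≤ d / (d + a + b) + a / (d + a) + b / (d + b) := by
        gcongr ?_ + a / ?_ + b / ?_ <;> linarith

lemma sum_mul_le_of_sum_le_add {A x : ι → ι → R} (hA : ∀ i j, 0 ≤ A i j) (hx : ∀ i j, 0 ≤ x i j)
    (hx1 : ∀ i j, x i j ≤ 1) {M : R} (hM : ∀ σ : Equiv.Perm ι, ∑ i, x i (σ i) ≤ M)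
    {d : R} (hd : 0 < d) {a b : ι → R} (ha : ∀ i, 0 ≤ a i) (hb : ∀ j, 0 ≤ b j)
    (hrow : ∀ i, ∑ j, A i j ≤ d + a i) (hcol : ∀ j, ∑ i, A i j ≤ d + b j) :
    ∑ i, ∑ j, A i j * x i j ≤ d * M + ∑ i, a i + ∑ j, b j := by
  have hmatching : ∑ i, ∑ j, A i j / (d + a i + b j) * x i j ≤ M := by
    refine sum_mul_le_of_sum_le_one (fun i j => ?_) (fun i => ?_) (fun j => ?_) hx hM
    · exact div_nonneg (hA i j) (add_nonneg (add_nonneg hd.le (ha i)) (hb j))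
    · exact sum_div_add_add_le_one (hA i) hd (ha i) hb (hrow i)
    · simp only [add_right_comm d _ (b j)]
      exact sum_div_add_add_le_one (fun i => hA i j) hd (hb j) ha (hcol j)
  have hexcess : ∀ {y t : R}, 0 ≤ t → y ≤ d + t → y * (t / (d + t)) ≤ t := fun {y t} ht hy => by
    rw [mul_div_left_comm]
    exact mul_le_of_le_one_right ht (div_le_one_of_le₀ hy (by positivity))
  have hentry : ∀ i j, A i j * x i j ≤ d * (A i j / (d + a i + b j) * x i j)
      + A i j * (a i / (d + a i)) + A i j * (b j / (d + b j)) := fun i j => by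
    have hai := ha i
    have hbj := hb j
    have hAij := hA i j
    calc A i j * x i j
        ≤ A i j * x i j * (d / (d + a i + b j) + a i / (d + a i) + b j / (d + b j)) :=
          le_mul_of_one_le_right (mul_nonneg hAij (hx i j)) (one_le_div_add_add hd hai hbj)
      _ = d * (A i j / (d + a i + b j) * x i j) + A i j * x i j * (a i / (d + a i))
          + A i j * x i j * (b j / (d + b j)) := by ring
      _ ≤ _ := by
          gcongr <;> exact mul_le_of_le_one_right hAij (hx1 i j)
  calc ∑ i, ∑ j, A i j * x i j
      ≤ ∑ i, ∑ j, (d * (A i j / (d + a i + b j) * x i j) + A i j * (a i / (d + a i))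
          + A i j * (b j / (d + b j))) :=
        Finset.sum_le_sum fun i _ => Finset.sum_le_sum fun j _ => hentry i j
    _ = d * ∑ i, ∑ j, A i j / (d + a i + b j) * x i j + ∑ i, (∑ j, A i j) * (a i / (d + a i))
          + ∑ j, (∑ i, A i j) * (b j / (d + b j)) := by
        simp only [Finset.sum_add_distrib, Finset.mul_sum, Finset.sum_mul]
        rw [Finset.sum_comm (f := fun i j => A i j * (b j / (d + b j)))]
    _ ≤ d * M + ∑ i, a i + ∑ j, b j := by
        gcongr with i _ j _
        exacts [hexcess (ha i) (hrow i), hexcess (hb j) (hcol j)]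

end Assignment

section SecondMoment

variable {Ω J : Type*} [MeasurableSpace Ω] {P : Measure Ω} [IsProbabilityMeasure P]

lemma integral_abs_le_sqrt {f : Ω → ℝ} (hf : MemLp f 2 P) :
    ∫ ω, |f ω| ∂P ≤ √(∫ ω, f ω ^ 2 ∂P) := by
  have hvar := ProbabilityTheory.variance_nonneg |f| P
  rw [ProbabilityTheory.variance_eq_sub hf.abs] at hvar
  refine Real.le_sqrt_of_sq_le (sub_nonneg.1 ?_)
  simpa using hvar

lemma integral_sq_sum_indicator_sub [Fintype J] {E : J → Set Ω} (hE : ∀ j, MeasurableSet (E j))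
    (c : ℝ) :
    ∫ ω, (∑ j, (E j).indicator 1 ω - c) ^ 2 ∂P
      = ∑ i, ∑ j, P.real (E i ∩ E j) - 2 * c * ∑ j, P.real (E j) + c ^ 2 := by
  have hE₂ : ∀ i j, MeasurableSet (E i ∩ E j) := fun i j => (hE i).inter (hE j)
  have hint : ∀ {A : Set Ω}, MeasurableSet A → Integrable (A.indicator (1 : Ω → ℝ)) P :=
    fun hA => (integrable_const 1).indicator hA
  have hint₁ : Integrable (fun ω => ∑ j, (E j).indicator (1 : Ω → ℝ) ω) P :=
    integrable_finsetSum _ fun j _ => hint (hE j)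
  have hint₂ : ∀ i, Integrable (fun ω => ∑ j, (E i ∩ E j).indicator (1 : Ω → ℝ) ω) P :=
    fun i => integrable_finsetSum _ fun j _ => hint (hE₂ i j)
  have hint₃ : Integrable (fun ω => ∑ i, ∑ j, (E i ∩ E j).indicator (1 : Ω → ℝ) ω) P :=
    integrable_finsetSum _ fun i _ => hint₂ i
  calc ∫ ω, (∑ j, (E j).indicator 1 ω - c) ^ 2 ∂P
      = ∫ ω, (∑ i, ∑ j, (E i ∩ E j).indicator (1 : Ω → ℝ) ω
          - 2 * c * ∑ j, (E j).indicator (1 : Ω → ℝ) ω + c ^ 2) ∂P := by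
        congr 1 with ω
        simp only [Set.inter_indicator_one, Pi.mul_apply, ← Finset.sum_mul_sum]
        ring
    _ = ∑ i, ∑ j, P.real (E i ∩ E j) - 2 * c * ∑ j, P.real (E j) + c ^ 2 := by
        have hint₄ : Integrable (fun ω => 2 * c * ∑ j, (E j).indicator (1 : Ω → ℝ) ω) P :=
          hint₁.const_mul _
        rw [integral_add (by exact hint₃.sub hint₄) (integrable_const _), integral_sub hint₃ hint₄,
          integral_const_mul, integral_finsetSum _ fun i _ => hint₂ i,
          integral_finsetSum _ fun j _ => hint (hE j)]
        simp only [integral_finsetSum _ fun j _ => hint (hE₂ _ j), integral_indicator_one, hE, hE₂,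
          integral_const, probReal_univ, one_smul]

lemma integral_sq_sum_indicator_sub_le [Fintype J] {E : J → Set Ω}
    (hE : ∀ j, MeasurableSet (E j)) {μ δ : ℝ}
    (hlower : ∀ j, μ * (1 - δ) ≤ P.real (E j)) (hupper : ∀ j, P.real (E j) ≤ μ)
    (hpair : Pairwise fun i j => P.real (E i ∩ E j) ≤ μ ^ 2) :
    ∫ ω, (∑ j, (E j).indicator 1 ω - Fintype.card J * μ) ^ 2 ∂P
      ≤ Fintype.card J * μ + 2 * δ * (Fintype.card J * μ) ^ 2 := by
  classical
  obtain ⟨N, hN⟩ : ∃ N : ℝ, N = Fintype.card J := ⟨_, rfl⟩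
  rw [integral_sq_sum_indicator_sub hE, ← hN]
  have hpairs : ∑ i, ∑ j, P.real (E i ∩ E j) ≤ N * μ + (N * μ) ^ 2 := by
    calc ∑ i, ∑ j, P.real (E i ∩ E j) ≤ ∑ i, ∑ j, (μ ^ 2 + if i = j then μ else 0) := by
          refine Finset.sum_le_sum fun i _ => Finset.sum_le_sum fun j _ => ?_
          rcases eq_or_ne i j with rfl | hij
          · simpa using (hupper i).trans (le_add_of_nonneg_left (sq_nonneg μ))
          · simpa [hij] using hpair hij
      _ = N * μ + (N * μ) ^ 2 := by
        simp only [Finset.sum_add_distrib, Finset.sum_const, Finset.card_univ, nsmul_eq_mul,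
          Finset.sum_ite_eq, Finset.mem_univ, ↓reduceIte, hN]
        ring
  have hsingles : N * (μ * (1 - δ)) ≤ ∑ j, P.real (E j) := by
    simpa [hN] using Finset.sum_le_sum fun j (_ : j ∈ Finset.univ) => hlower j
  have hNμ : 0 ≤ N * μ := by
    simpa [hN] using
      Finset.sum_nonneg fun j (_ : j ∈ Finset.univ) => measureReal_nonneg.trans (hupper j)
  calc ∑ i, ∑ j, P.real (E i ∩ E j) - 2 * (N * μ) * ∑ j, P.real (E j) + (N * μ) ^ 2
      ≤ N * μ + (N * μ) ^ 2 - 2 * (N * μ) * (N * (μ * (1 - δ))) + (N * μ) ^ 2 := by gcongr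
    _ = N * μ + 2 * δ * (N * μ) ^ 2 := by ring

end SecondMoment

section BinomialMoments

lemma le_add_choose_succ (x k : ℕ) : x ≤ k + x.choose (k + 1) := by
  induction x with
  | zero => simp
  | succ x ih =>
    rw [Nat.choose_succ_succ, Nat.succ_eq_add_one]
    rcases le_or_gt k x with h | h
    · have := Nat.choose_pos h
      omega
    · omega

lemma choose_le_ite_add (x r : ℕ) :
    x.choose r ≤ (if r ≤ x then 1 else 0) + (r + 1) * x.choose (r + 1) := by
  split_ifs with h
  · rcases h.eq_or_lt with rfl | h
    · simp
    · rw [mul_comm, Nat.choose_succ_right_eq]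
      exact le_add_left (Nat.le_mul_of_pos_right _ (by omega))
  · simp [Nat.choose_eq_zero_of_lt (not_le.1 h)]

/-- `E[C(N, r)]` for a binomial random variable `N` with `m` trials and success probability `p`. -/
def binomialMoment (m r : ℕ) (p : ℝ) : ℝ :=
  m.choose r * p ^ r

lemma binomialMoment_le (m r : ℕ) {p : ℝ} (hp : 0 ≤ p) : binomialMoment m r p ≤ (m * p) ^ r := by
  rw [binomialMoment, mul_pow]
  gcongr
  exact_mod_cast Nat.choose_le_pow m r

lemma le_binomialMoment {m r : ℕ} (hr : 2 * r ≤ m) {p : ℝ} (hp : 0 ≤ p) :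
    (m * p / 2) ^ r / r.factorial ≤ binomialMoment m r p := by
  have hm : (m : ℝ) / 2 ≤ (m + 1 - r : ℕ) := by
    have : (m : ℝ) ≤ 2 * (m + 1 - r : ℕ) := by exact_mod_cast (by omega : m ≤ 2 * (m + 1 - r))
    linarith
  calc (m * p / 2) ^ r / r.factorial = (m / 2) ^ r / r.factorial * p ^ r := by
        rw [mul_div_right_comm, mul_pow]; ring
    _ ≤ (m + 1 - r : ℕ) ^ r / r.factorial * p ^ r := by gcongr
    _ ≤ binomialMoment m r p := by
        unfold binomialMoment
        gcongr
        exact Nat.pow_le_choose r m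

lemma succ_mul_binomialMoment_succ_le (m r : ℕ) {p : ℝ} (hp : 0 ≤ p) :
    (r + 1) * binomialMoment m (r + 1) p ≤ binomialMoment m r p * (m * p) := by
  have hchoose : (m.choose (r + 1) : ℝ) * (r + 1) ≤ m.choose r * m := by
    exact_mod_cast (Nat.choose_succ_right_eq m r).trans_le (Nat.mul_le_mul_left _ (Nat.sub_le m r))
  calc (r + 1) * binomialMoment m (r + 1) p
      = m.choose (r + 1) * (r + 1) * p ^ (r + 1) := by unfold binomialMoment; ring
    _ ≤ m.choose r * m * p ^ (r + 1) := by gcongr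
    _ = binomialMoment m r p * (m * p) := by unfold binomialMoment; ring

end BinomialMoments

section HitCount

variable {α κ : Type*} [Fintype κ]

open Classical in
/-- The number of the sample points `ω k`, `k : κ`, that lie in `A`. -/
def hitCount (A : Set α) (ω : κ → α) : ℕ :=
  (Finset.univ.filter fun k => ω k ∈ A).card

lemma choose_hitCount (A : Set α) (r : ℕ) (ω : κ → α) :
    ((hitCount A ω).choose r : ℝ) = ∑ T ∈ Finset.powersetCard r (Finset.univ : Finset κ),
      ((T : Set κ).pi fun _ => A).indicator 1 ω := by
  classical
  simp only [hitCount, ← Finset.card_powersetCard, Set.indicator_apply, Pi.one_apply,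
    Finset.sum_boole]
  congr 2
  ext T
  simp [Finset.mem_powersetCard, Finset.subset_iff, Set.mem_pi, and_comm]

lemma choose_hitCount_mul_choose_hitCount (A B : Set α) (r s : ℕ) (ω : κ → α) :
    ((hitCount A ω).choose r : ℝ) * (hitCount B ω).choose s
      = ∑ T ∈ Finset.powersetCard r (Finset.univ : Finset κ),
          ∑ T' ∈ Finset.powersetCard s (Finset.univ : Finset κ),
            (((T : Set κ).pi fun _ => A) ∩ (T' : Set κ).pi fun _ => B).indicator 1 ω := by
  simp only [choose_hitCount, Finset.sum_mul_sum, Set.inter_indicator_one, Pi.mul_apply]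

lemma indicator_le_hitCount_le_choose (A : Set α) (r : ℕ) (ω : κ → α) :
    {ω | r ≤ hitCount A ω}.indicator (1 : (κ → α) → ℝ) ω ≤ (hitCount A ω).choose r := by
  refine Set.indicator_apply_le' (fun h => ?_) fun _ => Nat.cast_nonneg _
  exact Nat.one_le_cast.2 (Nat.choose_pos h)

lemma choose_hitCount_le_indicator_add (A : Set α) (r : ℕ) (ω : κ → α) :
    ((hitCount A ω).choose r : ℝ) ≤ {ω | r ≤ hitCount A ω}.indicator (1 : (κ → α) → ℝ) ω
      + (r + 1) * (hitCount A ω).choose (r + 1) := by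
  simp only [Set.indicator_apply, Set.mem_ofPred_eq, Pi.one_apply]
  exact_mod_cast choose_le_ite_add (hitCount A ω) r

variable [MeasurableSpace α] {A B : Set α}

lemma measurable_hitCount (hA : MeasurableSet A) :
    Measurable (hitCount A : (κ → α) → ℕ) := by
  classical
  have hsum : (hitCount A : (κ → α) → ℕ) = fun ω => ∑ k, A.indicator 1 (ω k) := by
    ext ω
    simp [hitCount, Set.indicator_apply]
  rw [hsum]
  exact Finset.measurable_sum _ fun k _ =>
    (measurable_one.indicator hA).comp (measurable_pi_apply k)

lemma measurableSet_le_hitCount (hA : MeasurableSet A) (r : ℕ) :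
    MeasurableSet {ω : κ → α | r ≤ hitCount A ω} :=
  measurableSet_le measurable_const (measurable_hitCount hA)

omit [Fintype κ] in
lemma measurableSet_finset_pi_const (hA : MeasurableSet A) (T : Finset κ) :
    MeasurableSet ((T : Set κ).pi fun _ => A) :=
  .pi T.countable_toSet fun _ _ => hA

variable {P : Measure α} [IsProbabilityMeasure P]

lemma integral_choose_hitCount (hA : MeasurableSet A) (r : ℕ) :
    ∫ ω, ((hitCount A ω).choose r : ℝ) ∂(Measure.pi fun _ : κ => P)
      = binomialMoment (Fintype.card κ) r (P.real A) := by
  have hT : ∀ T ∈ Finset.powersetCard r (Finset.univ : Finset κ),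
      ∫ ω, ((T : Set κ).pi fun _ => A).indicator (1 : (κ → α) → ℝ) ω ∂(Measure.pi fun _ : κ => P)
        = P.real A ^ r := fun T hT => by
    rw [integral_indicator_one (measurableSet_finset_pi_const hA T), Measure.real,
      Measure.pi_pi_finset]
    simp [Measure.real, (Finset.mem_powersetCard.1 hT).2]
  simp only [choose_hitCount]
  rw [integral_finsetSum, Finset.sum_congr rfl hT]
  · simp [binomialMoment]
  · exact fun T _ => (integrable_const 1).indicator (measurableSet_finset_pi_const hA T)

lemma integrable_choose_hitCount (hA : MeasurableSet A) (r : ℕ) :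
    Integrable (fun ω => ((hitCount A ω).choose r : ℝ)) (Measure.pi fun _ : κ => P) := by
  simp only [choose_hitCount]
  exact integrable_finsetSum _ fun T _ =>
    (integrable_const 1).indicator (measurableSet_finset_pi_const hA T)

lemma measureReal_pi_inter_pi_le (hAB : Disjoint A B) (T T' : Finset κ) :
    (Measure.pi fun _ : κ => P).real (((T : Set κ).pi fun _ => A) ∩ (T' : Set κ).pi fun _ => B)
      ≤ P.real A ^ T.card * P.real B ^ T'.card := by
  classical
  by_cases hT : Disjoint T T'
  · have hunion : ((T : Set κ).pi fun _ => A) ∩ ((T' : Set κ).pi fun _ => B)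
        = ((T ∪ T' : Finset κ) : Set κ).pi fun k => if k ∈ T then A else B := by
      have := Finset.disjoint_left.1 hT
      ext ω
      simp only [Set.mem_inter_iff, Set.mem_pi, Finset.coe_union, Set.mem_union]
      grind
    have hprodA : ∏ k ∈ T, P (if k ∈ T then A else B) = P A ^ T.card :=
      Finset.prod_eq_pow_card fun k hk => by rw [if_pos hk]
    have hprodB : ∏ k ∈ T', P (if k ∈ T then A else B) = P B ^ T'.card :=
      Finset.prod_eq_pow_card fun k hk => by rw [if_neg (Finset.disjoint_right.1 hT hk)]
    rw [hunion, Measure.real, Measure.pi_pi_finset, Finset.prod_union hT, hprodA, hprodB,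
      ENNReal.toReal_mul, ENNReal.toReal_pow, ENNReal.toReal_pow, Measure.real, Measure.real]
  · obtain ⟨k, hk, hk'⟩ := Finset.not_disjoint_iff.1 hT
    have hempty : ((T : Set κ).pi fun _ => A) ∩ ((T' : Set κ).pi fun _ => B) = ∅ :=
      Set.eq_empty_of_forall_notMem fun ω hω => Set.disjoint_left.1 hAB (hω.1 k hk) (hω.2 k hk')
    rw [hempty, measureReal_empty]
    positivity

lemma integrable_choose_hitCount_mul (hA : MeasurableSet A) (hB : MeasurableSet B) (r s : ℕ) :
    Integrable (fun ω => ((hitCount A ω).choose r : ℝ) * (hitCount B ω).choose s)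
      (Measure.pi fun _ : κ => P) := by
  simp only [choose_hitCount_mul_choose_hitCount]
  exact integrable_finsetSum _ fun T _ => integrable_finsetSum _ fun T' _ =>
    (integrable_const 1).indicator
      ((measurableSet_finset_pi_const hA T).inter (measurableSet_finset_pi_const hB T'))

lemma integral_choose_hitCount_mul_le (hA : MeasurableSet A) (hB : MeasurableSet B)
    (hAB : Disjoint A B) (r s : ℕ) :
    ∫ ω, ((hitCount A ω).choose r : ℝ) * (hitCount B ω).choose s ∂(Measure.pi fun _ : κ => P)
      ≤ binomialMoment (Fintype.card κ) r (P.real A)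
        * binomialMoment (Fintype.card κ) s (P.real B) := by
  have hmeas : ∀ T T' : Finset κ,
      MeasurableSet (((T : Set κ).pi fun _ => A) ∩ (T' : Set κ).pi fun _ => B) := fun T T' =>
    (measurableSet_finset_pi_const hA T).inter (measurableSet_finset_pi_const hB T')
  have hint : ∀ T T' : Finset κ, Integrable
      ((((T : Set κ).pi fun _ => A) ∩ (T' : Set κ).pi fun _ => B).indicator (1 : (κ → α) → ℝ))
      (Measure.pi fun _ : κ => P) := fun T T' => (integrable_const 1).indicator (hmeas T T')
  calc ∫ ω, ((hitCount A ω).choose r : ℝ) * (hitCount B ω).choose s ∂(Measure.pi fun _ : κ => P)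
      = ∑ T ∈ Finset.powersetCard r (Finset.univ : Finset κ),
          ∑ T' ∈ Finset.powersetCard s (Finset.univ : Finset κ), (Measure.pi fun _ : κ => P).real
            (((T : Set κ).pi fun _ => A) ∩ (T' : Set κ).pi fun _ => B) := by
        simp only [choose_hitCount_mul_choose_hitCount]
        rw [integral_finsetSum _ fun T _ => integrable_finsetSum _ fun T' _ => hint T T']
        simp only [integral_finsetSum _ fun T' _ => hint _ T', integral_indicator_one, hmeas]
    _ ≤ ∑ _T ∈ Finset.powersetCard r (Finset.univ : Finset κ),
          ∑ _T' ∈ Finset.powersetCard s (Finset.univ : Finset κ), P.real A ^ r * P.real B ^ s := by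
        gcongr with T hT T' hT'
        rw [← (Finset.mem_powersetCard.1 hT).2, ← (Finset.mem_powersetCard.1 hT').2]
        exact measureReal_pi_inter_pi_le hAB T T'
    _ = binomialMoment (Fintype.card κ) r (P.real A)
          * binomialMoment (Fintype.card κ) s (P.real B) := by
        simp only [Finset.sum_const, Finset.card_powersetCard, Finset.card_univ, nsmul_eq_mul,
          binomialMoment]
        ring

lemma measureReal_le_hitCount_le (hA : MeasurableSet A) (r : ℕ) :
    (Measure.pi fun _ : κ => P).real {ω | r ≤ hitCount A ω}
      ≤ binomialMoment (Fintype.card κ) r (P.real A) := by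
  rw [← integral_choose_hitCount hA, ← integral_indicator_one (measurableSet_le_hitCount hA r)]
  exact integral_mono ((integrable_const 1).indicator (measurableSet_le_hitCount hA r))
    (integrable_choose_hitCount hA r) (indicator_le_hitCount_le_choose A r)

lemma le_measureReal_le_hitCount (hA : MeasurableSet A) (r : ℕ) :
    binomialMoment (Fintype.card κ) r (P.real A) * (1 - Fintype.card κ * P.real A)
      ≤ (Measure.pi fun _ : κ => P).real {ω | r ≤ hitCount A ω} := by
  have hint : Integrable ({ω | r ≤ hitCount A ω}.indicator (1 : (κ → α) → ℝ))
      (Measure.pi fun _ : κ => P) :=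
    (integrable_const 1).indicator (measurableSet_le_hitCount hA r)
  have hint' := (integrable_choose_hitCount (κ := κ) (P := P) hA (r + 1)).const_mul (r + 1 : ℝ)
  have hbonferroni := integral_mono (integrable_choose_hitCount hA r) (hint.add hint')
    (choose_hitCount_le_indicator_add A r)
  rw [integral_add' hint hint', integral_const_mul, integral_choose_hitCount hA,
    integral_choose_hitCount hA, integral_indicator_one (measurableSet_le_hitCount hA r)]
    at hbonferroni
  have hnext := succ_mul_binomialMoment_succ_le (Fintype.card κ) r
    (measureReal_nonneg (μ := P) (s := A))
  linarith

lemma measureReal_le_hitCount_inter_le (hA : MeasurableSet A) (hB : MeasurableSet B)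
    (hAB : Disjoint A B) (r s : ℕ) :
    (Measure.pi fun _ : κ => P).real ({ω | r ≤ hitCount A ω} ∩ {ω | s ≤ hitCount B ω})
      ≤ binomialMoment (Fintype.card κ) r (P.real A)
        * binomialMoment (Fintype.card κ) s (P.real B) := by
  refine le_trans ?_ (integral_choose_hitCount_mul_le hA hB hAB r s)
  have hmeas := (measurableSet_le_hitCount (κ := κ) hA r).inter (measurableSet_le_hitCount hB s)
  rw [← integral_indicator_one hmeas]
  refine integral_mono_of_nonneg (.of_forall fun ω => Set.indicator_nonneg (by simp) ω)
    (integrable_choose_hitCount_mul hA hB r s) (.of_forall fun ω => ?_)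
  simp only [Set.inter_indicator_one, Pi.mul_apply]
  exact mul_le_mul (indicator_le_hitCount_le_choose A r ω) (indicator_le_hitCount_le_choose B s ω)
    (Set.indicator_nonneg (by simp) ω) (Nat.cast_nonneg _)

lemma integral_sq_sum_indicator_le_hitCount_sub_le {J : Type*} [Fintype J] {A : J → Set α}
    (hA : ∀ j, MeasurableSet (A j)) (hdisj : Pairwise fun i j => Disjoint (A i) (A j)) {p : ℝ}
    (hp : ∀ j, P.real (A j) = p) (r : ℕ) :
    ∫ ω, (∑ j, {ω | r ≤ hitCount (A j) ω}.indicator 1 ω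
        - Fintype.card J * binomialMoment (Fintype.card κ) r p) ^ 2 ∂(Measure.pi fun _ : κ => P)
      ≤ Fintype.card J * binomialMoment (Fintype.card κ) r p
        + 2 * (Fintype.card κ * p)
          * (Fintype.card J * binomialMoment (Fintype.card κ) r p) ^ 2 := by
  refine integral_sq_sum_indicator_sub_le (fun j => measurableSet_le_hitCount (hA j) r)
    (fun j => ?_) (fun j => ?_) fun i j hij => ?_
  · simpa only [hp] using le_measureReal_le_hitCount (κ := κ) (P := P) (hA j) r
  · simpa only [hp] using measureReal_le_hitCount_le (κ := κ) (P := P) (hA j) r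
  · simpa only [hp, sq] using
      measureReal_le_hitCount_inter_le (κ := κ) (P := P) (hA i) (hA j) (hdisj hij) r r

end HitCount

section Grid

variable {m n : ℕ}

/-- The expected number of points in a given cell, `m(n) p_n` in the notation of the paper. -/
def meanCount (m n : ℕ) : ℝ :=
  m / n ^ 2

lemma meanCount_nonneg (m n : ℕ) : 0 ≤ meanCount m n := by
  unfold meanCount; positivity

instance instIsProbabilityMeasureCellMeasure [NeZero n] : IsProbabilityMeasure (cellMeasure n) where
  measure_univ := by
    have hn : (n : ENNReal) ≠ 0 := Nat.cast_ne_zero.2 (NeZero.ne n)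
    simpa [cellMeasure, ← sq] using ENNReal.inv_mul_cancel (pow_ne_zero 2 hn) (by finiteness)

instance instIsProbabilityMeasureGridMeasure [NeZero n] :
    IsProbabilityMeasure (gridMeasure m n) :=
  inferInstanceAs (IsProbabilityMeasure (Measure.pi fun _ => cellMeasure n))

lemma integrable_gridMeasure [NeZero n] (f : (Fin m → Fin n × Fin n) → ℝ) :
    Integrable f (gridMeasure m n) :=
  .of_finite

lemma cellMeasure_real_singleton (c : Fin n × Fin n) :
    (cellMeasure n).real {c} = ((n : ℝ) ^ 2)⁻¹ := by
  simp [cellMeasure, Measure.real]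

lemma hitCount_singleton (i j : Fin n) (ω : Fin m → Fin n × Fin n) :
    hitCount {(i, j)} ω = cellCount i j ω := by
  simp [hitCount, cellCount]

lemma integral_choose_cellCount [NeZero n] (i j : Fin n) (r : ℕ) :
    ∫ ω, ((cellCount i j ω).choose r : ℝ) ∂(gridMeasure m n)
      = binomialMoment m r ((n : ℝ) ^ 2)⁻¹ := by
  simpa [hitCount_singleton, cellMeasure_real_singleton, gridMeasure] using
    integral_choose_hitCount (κ := Fin m) (P := cellMeasure n) (measurableSet_singleton (i, j)) r

lemma le_maxAssign (ω : Fin m → Fin n × Fin n) (σ : Equiv.Perm (Fin n)) :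
    assignSum σ ω ≤ maxAssign ω :=
  le_ciSup (f := fun σ => assignSum σ ω) (Set.finite_range _).bddAbove σ

lemma EmaxAssign_nonneg (m n : ℕ) : 0 ≤ EmaxAssign m n :=
  integral_nonneg fun _ => Real.iSup_nonneg fun _ => Finset.sum_nonneg fun _ _ => Nat.cast_nonneg _

end Grid

section UpperBound

variable {m n : ℕ}

lemma maxAssign_le (k : ℕ) (ω : Fin m → Fin n × Fin n) :
    maxAssign ω ≤ n * k + ∑ i, ∑ j, ((cellCount i j ω).choose (k + 1) : ℝ) := by
  refine ciSup_le fun σ => ?_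
  calc assignSum σ ω
      ≤ ∑ i, ((k : ℝ) + (cellCount i (σ i) ω).choose (k + 1)) :=
        Finset.sum_le_sum fun i _ => by exact_mod_cast le_add_choose_succ _ k
    _ ≤ ∑ i, ((k : ℝ) + ∑ j, ((cellCount i j ω).choose (k + 1) : ℝ)) := by
        gcongr with i
        exact Finset.single_le_sum (f := fun j => ((cellCount i j ω).choose (k + 1) : ℝ))
          (fun j _ => Nat.cast_nonneg _) (Finset.mem_univ (σ i))
    _ = n * k + ∑ i, ∑ j, ((cellCount i j ω).choose (k + 1) : ℝ) := by
        simp [Finset.sum_add_distrib]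

lemma EmaxAssign_le [NeZero n] (m k : ℕ) :
    EmaxAssign m n ≤ n * k + n ^ 2 * meanCount m n ^ (k + 1) := by
  calc EmaxAssign m n
      ≤ ∫ ω, (n * k + ∑ i, ∑ j, ((cellCount i j ω).choose (k + 1) : ℝ)) ∂(gridMeasure m n) :=
        integral_mono (integrable_gridMeasure _) (integrable_gridMeasure _) (maxAssign_le k)
    _ = n * k + n ^ 2 * binomialMoment m (k + 1) ((n : ℝ) ^ 2)⁻¹ := by
        rw [integral_add (integrable_gridMeasure _) (integrable_gridMeasure _),
          integral_finsetSum _ fun i _ => integrable_gridMeasure _]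
        simp only [integral_finsetSum _ fun _ _ => integrable_gridMeasure _,
          integral_choose_cellCount]
        simp only [integral_const, probReal_univ, smul_eq_mul, one_mul, Finset.sum_const,
          Finset.card_univ, Fintype.card_fin, nsmul_eq_mul, add_right_inj]
        ring
    _ ≤ n * k + n ^ 2 * meanCount m n ^ (k + 1) := by
        rw [meanCount, div_eq_mul_inv]
        gcongr
        exact binomialMoment_le m (k + 1) (by positivity)

end UpperBound

section LowerBound

variable {m n : ℕ}

/-- The event that cell `(i, j)` receives at least `r` points. -/
def heavyCell (r : ℕ) (i j : Fin n) : Set (Fin m → Fin n × Fin n) :=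
  {ω | r ≤ cellCount i j ω}

/-- The largest number of heavy cells, those with at least `r` points, on the graph of a
permutation. It is the matching number of the random bipartite graph formed by the heavy cells. -/
def heavyMatching (r : ℕ) (ω : Fin m → Fin n × Fin n) : ℝ :=
  ⨆ σ : Equiv.Perm (Fin n), ∑ i, (heavyCell r i (σ i)).indicator 1 ω

lemma sum_indicator_heavyCell_le (r : ℕ) (ω : Fin m → Fin n × Fin n) (σ : Equiv.Perm (Fin n)) :
    ∑ i, (heavyCell r i (σ i)).indicator 1 ω ≤ heavyMatching r ω :=
  le_ciSup (f := fun σ : Equiv.Perm (Fin n) => ∑ i, (heavyCell r i (σ i)).indicator 1 ω)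
    (Set.finite_range _).bddAbove σ

lemma mul_heavyMatching_le_maxAssign (r : ℕ) (ω : Fin m → Fin n × Fin n) :
    r * heavyMatching r ω ≤ maxAssign ω := by
  rw [heavyMatching, Real.mul_iSup_of_nonneg r.cast_nonneg]
  refine ciSup_le fun σ => le_trans ?_ (le_maxAssign ω σ)
  rw [assignSum, Finset.mul_sum]
  refine Finset.sum_le_sum fun i _ => ?_
  by_cases h : ω ∈ heavyCell r i (σ i)
  · rw [Set.indicator_of_mem h, Pi.one_apply, mul_one]
    exact Nat.cast_le.2 h
  · simp [h]

lemma sum_sum_indicator_heavyCell_le (r : ℕ) {d : ℝ} (hd : 0 < d) (ω : Fin m → Fin n × Fin n) :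
    ∑ i, ∑ j, (heavyCell r i j).indicator 1 ω
      ≤ d * heavyMatching r ω + ∑ i, |∑ j, (heavyCell r i j).indicator 1 ω - d|
        + ∑ j, |∑ i, (heavyCell r i j).indicator 1 ω - d| := by
  set Y : Fin n → Fin n → ℝ := fun i j => (heavyCell r i j).indicator 1 ω with hY
  have hY0 : ∀ i j, 0 ≤ Y i j := fun i j => Set.indicator_nonneg (by simp) ω
  have hY1 : ∀ i j, Y i j ≤ 1 := fun i j => Set.indicator_le_self' (by simp) ω
  have hYY : ∀ i j, Y i j * Y i j = Y i j := fun i j => by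
    by_cases h : ω ∈ heavyCell r i j <;> simp [hY, h]
  have hle : ∀ y : ℝ, y ≤ d + |y - d| := fun y => by linarith [le_abs_self (y - d)]
  simpa only [hYY] using
    sum_mul_le_of_sum_le_add hY0 hY0 hY1 (sum_indicator_heavyCell_le r ω) hd
      (fun i => abs_nonneg _) (fun j => abs_nonneg _) (fun i => hle (∑ j, Y i j))
      fun j => hle (∑ i, Y i j)

variable [NeZero n]

lemma le_measureReal_heavyCell (r : ℕ) (i j : Fin n) :
    binomialMoment m r ((n : ℝ) ^ 2)⁻¹ * (1 - meanCount m n)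
      ≤ (gridMeasure m n).real (heavyCell r i j) := by
  simpa [hitCount_singleton, cellMeasure_real_singleton, meanCount, div_eq_mul_inv, gridMeasure,
    heavyCell] using
    le_measureReal_le_hitCount (κ := Fin m) (P := cellMeasure n) (measurableSet_singleton (i, j)) r

lemma integral_abs_sum_indicator_heavyCell_sub_le (r : ℕ) {c : Fin n → Fin n × Fin n}
    (hc : c.Injective) :
    ∫ ω, |∑ l, (heavyCell r (c l).1 (c l).2).indicator 1 ω
        - n * binomialMoment m r ((n : ℝ) ^ 2)⁻¹| ∂(gridMeasure m n)
      ≤ √(n * binomialMoment m r ((n : ℝ) ^ 2)⁻¹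
          + 2 * meanCount m n * (n * binomialMoment m r ((n : ℝ) ^ 2)⁻¹) ^ 2) := by
  refine (integral_abs_le_sqrt .of_discrete).trans (Real.sqrt_le_sqrt ?_)
  simpa [← hitCount_singleton, meanCount, div_eq_mul_inv, gridMeasure, heavyCell] using
    integral_sq_sum_indicator_le_hitCount_sub_le (κ := Fin m) (P := cellMeasure n)
      (A := fun l => {c l}) (fun l => measurableSet_singleton (c l))
      (fun l l' h => Set.disjoint_singleton.2 (hc.ne h))
      (fun l => cellMeasure_real_singleton (c l)) r

lemma sum_measureReal_heavyCell_le (r : ℕ) {d : ℝ} (hd : 0 < d) :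
    ∑ i, ∑ j, (gridMeasure m n).real (heavyCell r i j)
      ≤ d * ∫ ω, heavyMatching r ω ∂(gridMeasure m n)
        + ∑ i, ∫ ω, |∑ j, (heavyCell r i j).indicator 1 ω - d| ∂(gridMeasure m n)
        + ∑ j, ∫ ω, |∑ i, (heavyCell r i j).indicator 1 ω - d| ∂(gridMeasure m n) := by
  have hint : ∀ f : (Fin m → Fin n × Fin n) → ℝ, Integrable f (gridMeasure m n) :=
    integrable_gridMeasure
  have hP : ∀ i j, (gridMeasure m n).real (heavyCell r i j)
      = ∫ ω, (heavyCell r i j).indicator 1 ω ∂(gridMeasure m n) := fun i j =>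
    (integral_indicator_one (Set.toFinite _).measurableSet).symm
  calc ∑ i, ∑ j, (gridMeasure m n).real (heavyCell r i j)
      = ∫ ω, ∑ i, ∑ j, (heavyCell r i j).indicator 1 ω ∂(gridMeasure m n) := by
        rw [integral_finsetSum _ fun i _ => hint _]
        simp only [integral_finsetSum _ fun _ _ => hint _, hP]
    _ ≤ ∫ ω, (d * heavyMatching r ω + ∑ i, |∑ j, (heavyCell r i j).indicator 1 ω - d|
          + ∑ j, |∑ i, (heavyCell r i j).indicator 1 ω - d|) ∂(gridMeasure m n) :=
        integral_mono (hint _) (hint _) (sum_sum_indicator_heavyCell_le r hd)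
    _ = _ := by
        rw [integral_add (hint _) (hint _), integral_add (hint _) (hint _), integral_const_mul,
          integral_finsetSum _ fun i _ => hint _, integral_finsetSum _ fun j _ => hint _]

lemma le_integral_heavyMatching (r : ℕ) (hμ : 0 < binomialMoment m r ((n : ℝ) ^ 2)⁻¹) :
    n * (1 - meanCount m n
        - 2 * √(1 / (n * binomialMoment m r ((n : ℝ) ^ 2)⁻¹) + 2 * meanCount m n))
      ≤ ∫ ω, heavyMatching r ω ∂(gridMeasure m n) := by
  set μ := binomialMoment m r ((n : ℝ) ^ 2)⁻¹
  obtain ⟨d, hd⟩ : ∃ d : ℝ, d = n * μ := ⟨_, rfl⟩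
  obtain ⟨D, hD⟩ : ∃ D : ℝ, D = √(1 / d + 2 * meanCount m n) := ⟨_, rfl⟩
  have hd0 : 0 < d := hd ▸ mul_pos (Nat.cast_pos.2 (NeZero.pos n)) hμ
  have hdD : √(d + 2 * meanCount m n * d ^ 2) = d * D := by
    rw [hD, ← Real.sqrt_sq hd0.le, ← Real.sqrt_mul (sq_nonneg d), Real.sqrt_sq hd0.le]
    congr 1
    field_simp
  have hmean : n * (d * (1 - meanCount m n))
      ≤ ∑ i, ∑ j, (gridMeasure m n).real (heavyCell r i j) := by
    calc n * (d * (1 - meanCount m n))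
        = ∑ _i : Fin n, ∑ _j : Fin n, μ * (1 - meanCount m n) := by simp [hd, mul_assoc]
      _ ≤ _ := Finset.sum_le_sum fun i _ => Finset.sum_le_sum fun j _ =>
          le_measureReal_heavyCell r i j
  have hdev : ∀ {c : Fin n → Fin n × Fin n}, c.Injective →
      ∫ ω, |∑ l, (heavyCell r (c l).1 (c l).2).indicator 1 ω - d| ∂(gridMeasure m n) ≤ d * D :=
    fun hc => by
      rw [← hdD, hd]
      exact integral_abs_sum_indicator_heavyCell_sub_le r hc
  have hrow := Finset.sum_le_sum fun i (_ : i ∈ Finset.univ) =>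
    hdev (c := fun j : Fin n => (i, j)) fun j j' h => (Prod.ext_iff.1 h).2
  have hcol := Finset.sum_le_sum fun j (_ : j ∈ Finset.univ) =>
    hdev (c := fun i : Fin n => (i, j)) fun i i' h => (Prod.ext_iff.1 h).1
  simp only [Finset.sum_const, Finset.card_univ, Fintype.card_fin, nsmul_eq_mul] at hrow hcol
  rw [← hd, ← hD]
  refine le_of_mul_le_mul_left ?_ hd0
  linarith [sum_measureReal_heavyCell_le (m := m) (n := n) r hd0]

lemma le_EmaxAssign (r : ℕ) (hμ : 0 < binomialMoment m r ((n : ℝ) ^ 2)⁻¹) :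
    r * (n * (1 - meanCount m n
        - 2 * √(1 / (n * binomialMoment m r ((n : ℝ) ^ 2)⁻¹) + 2 * meanCount m n)))
      ≤ EmaxAssign m n := by
  calc _ ≤ r * ∫ ω, heavyMatching r ω ∂(gridMeasure m n) := by
        gcongr
        exact le_integral_heavyMatching r hμ
    _ ≤ EmaxAssign m n := by
        rw [← integral_const_mul]
        exact integral_mono (integrable_gridMeasure _) (integrable_gridMeasure _)
          (mul_heavyMatching_le_maxAssign r)

end LowerBound

section Asymptotics

lemma tendsto_zero_of_tendsto_natCast_mul_pow {f : ℕ → ℝ} (hf : ∀ n, 0 ≤ f n) {k : ℕ}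
    (hk : k ≠ 0) {L : ℝ} (h : Tendsto (fun n : ℕ => n * f n ^ k) atTop (nhds L)) :
    Tendsto f atTop (nhds 0) := by
  have hpow : Tendsto (fun n => f n ^ k) atTop (nhds 0) := by
    refine (h.div_atTop tendsto_natCast_atTop_atTop).congr' ?_
    filter_upwards [eventually_gt_atTop 0] with n hn
    field_simp
  simpa [hk] using (hpow.rpow_const (p := (k : ℝ)⁻¹) (by simp)).congr fun n =>
    Real.pow_rpow_inv_natCast (hf n) hk

lemma tendsto_natCast_mul_pow_succ_zero {f : ℕ → ℝ} {k : ℕ} {L : ℝ}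
    (hf : Tendsto f atTop (nhds 0)) (h : Tendsto (fun n : ℕ => n * f n ^ k) atTop (nhds L)) :
    Tendsto (fun n : ℕ => n * f n ^ (k + 1)) atTop (nhds 0) := by
  simpa [pow_succ, mul_assoc] using h.mul hf

lemma tendsto_natCast_mul_pow_atTop {f : ℕ → ℝ} (hf : ∀ n, 0 ≤ f n) {k : ℕ} {L : ℝ} (hL : 0 < L)
    (hf0 : Tendsto f atTop (nhds 0))
    (h : Tendsto (fun n : ℕ => n * f n ^ (k + 1)) atTop (nhds L)) :
    Tendsto (fun n : ℕ => n * f n ^ k) atTop atTop := by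
  have hpos : ∀ᶠ n in atTop, 0 < f n := by
    filter_upwards [h.eventually_const_lt hL] with n hn
    exact (hf n).lt_of_ne' fun h0 => by simp [h0] at hn
  have hinv : Tendsto (fun n => (f n)⁻¹) atTop atTop :=
    (tendsto_nhdsWithin_iff.2 ⟨hf0, hpos⟩).inv_tendsto_nhdsGT_zero
  refine (h.pos_mul_atTop hL hinv).congr' ?_
  filter_upwards [hpos] with n hn
  rw [pow_succ, ← mul_assoc, mul_inv_cancel_right₀ hn.ne']

lemma tendsto_natCast_mul_pow_of_tendsto_div_rpow {f : ℕ → ℝ} {c : ℝ} (hc : c ≠ 0)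
    {k : ℕ} (hk : k ≠ 0)
    (h : Tendsto (fun n : ℕ => f n / (c * (n : ℝ) ^ (-(1 / (k : ℝ))))) atTop (nhds 1)) :
    Tendsto (fun n : ℕ => n * f n ^ k) atTop (nhds (c ^ k)) := by
  have hpow := (h.pow k).mul_const (c ^ k)
  rw [one_pow, one_mul] at hpow
  refine hpow.congr' ?_
  filter_upwards [eventually_gt_atTop 0] with n hn
  have hrpow : ((n : ℝ) ^ (-(1 / (k : ℝ)))) ^ k = (n : ℝ)⁻¹ := by
    rw [Real.rpow_neg n.cast_nonneg, inv_pow, one_div, Real.rpow_inv_natCast_pow n.cast_nonneg hk]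
  rw [div_pow, mul_pow, hrpow]
  field_simp

lemma tendsto_natCast_mul_pow_pred_atTop_and_pow_succ_zero {f : ℕ → ℝ} (hf : ∀ n, 0 ≤ f n) {c : ℝ}
    (hc : 0 < c) {k : ℕ} (hk : k ≠ 0)
    (h : Tendsto (fun n : ℕ => f n / (c * (n : ℝ) ^ (-(1 / (k : ℝ))))) atTop (nhds 1)) :
    Tendsto (fun n : ℕ => n * f n ^ (k - 1)) atTop atTop ∧
      Tendsto (fun n : ℕ => n * f n ^ (k + 1)) atTop (nhds 0) := by
  have hlim := tendsto_natCast_mul_pow_of_tendsto_div_rpow hc.ne' hk h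
  have hzero := tendsto_zero_of_tendsto_natCast_mul_pow hf hk hlim
  refine ⟨?_, tendsto_natCast_mul_pow_succ_zero hzero hlim⟩
  obtain ⟨r, rfl⟩ := Nat.exists_eq_succ_of_ne_zero hk
  exact tendsto_natCast_mul_pow_atTop hf (pow_pos hc _) hzero hlim

variable {m : ℕ → ℕ}

lemma eventually_le_of_tendsto_mul_meanCount_pow {r : ℕ}
    (hlow : Tendsto (fun n : ℕ => n * meanCount (m n) n ^ r) atTop atTop)
    (hzero : Tendsto (fun n => meanCount (m n) n) atTop (nhds 0)) :
    ∀ᶠ n in atTop, 2 * r ≤ m n := by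
  rcases r.eq_zero_or_pos with rfl | hr
  · simp
  filter_upwards [hlow.eventually_ge_atTop (2 * r : ℝ), hzero.eventually_le_const one_pos,
    eventually_gt_atTop 0] with n hn hle hn0
  have hn1 : (1 : ℝ) ≤ n := Nat.one_le_cast.2 hn0
  have hmean := meanCount_nonneg (m n) n
  have hcount : (m n : ℝ) = n * (n * meanCount (m n) n) := by
    rw [meanCount]
    field_simp
  suffices (2 * r : ℝ) ≤ m n by exact_mod_cast this
  calc (2 * r : ℝ) ≤ n * meanCount (m n) n ^ r := hn
    _ ≤ n * meanCount (m n) n := by gcongr; exact pow_le_of_le_one hmean hle hr.ne'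
    _ ≤ m n := hcount ▸ le_mul_of_one_le_left (by positivity) hn1

lemma tendsto_natCast_mul_binomialMoment_atTop {r : ℕ}
    (hlow : Tendsto (fun n : ℕ => n * meanCount (m n) n ^ r) atTop atTop)
    (hzero : Tendsto (fun n => meanCount (m n) n) atTop (nhds 0)) :
    Tendsto (fun n : ℕ => n * binomialMoment (m n) r ((n : ℝ) ^ 2)⁻¹) atTop atTop := by
  have hconst : 0 < ((2 : ℝ) ^ r * r.factorial)⁻¹ := by positivity
  refine tendsto_atTop_mono' _ ?_ (hlow.atTop_mul_const hconst)
  filter_upwards [eventually_le_of_tendsto_mul_meanCount_pow hlow hzero] with n hn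
  calc n * meanCount (m n) n ^ r * ((2 : ℝ) ^ r * r.factorial)⁻¹
      = n * ((m n * ((n : ℝ) ^ 2)⁻¹ / 2) ^ r / r.factorial) := by
        rw [meanCount, div_pow _ (2 : ℝ), ← div_eq_mul_inv (m n : ℝ)]
        field_simp
    _ ≤ n * binomialMoment (m n) r ((n : ℝ) ^ 2)⁻¹ := by
        gcongr
        exact le_binomialMoment hn (by positivity)

lemma tendsto_one_sub_meanCount_sub_sqrt {r : ℕ}
    (hlow : Tendsto (fun n : ℕ => n * meanCount (m n) n ^ r) atTop atTop)
    (hzero : Tendsto (fun n => meanCount (m n) n) atTop (nhds 0)) :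
    Tendsto (fun n : ℕ => 1 - meanCount (m n) n
        - 2 * √(1 / (n * binomialMoment (m n) r ((n : ℝ) ^ 2)⁻¹) + 2 * meanCount (m n) n))
      atTop (nhds 1) := by
  have hinv : Tendsto (fun n : ℕ => 1 / (n * binomialMoment (m n) r ((n : ℝ) ^ 2)⁻¹))
      atTop (nhds 0) :=
    tendsto_const_nhds.div_atTop (tendsto_natCast_mul_binomialMoment_atTop hlow hzero)
  simpa using (hzero.const_sub 1).sub ((hinv.add (hzero.const_mul 2)).sqrt.const_mul 2)

lemma eventually_le_EmaxAssign_div {r : ℕ}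
    (hlow : Tendsto (fun n : ℕ => n * meanCount (m n) n ^ r) atTop atTop)
    (hzero : Tendsto (fun n => meanCount (m n) n) atTop (nhds 0)) :
    ∀ᶠ n : ℕ in atTop, r * (1 - meanCount (m n) n
        - 2 * √(1 / (n * binomialMoment (m n) r ((n : ℝ) ^ 2)⁻¹) + 2 * meanCount (m n) n))
      ≤ EmaxAssign (m n) n / n := by
  filter_upwards [eventually_gt_atTop 0,
    (tendsto_natCast_mul_binomialMoment_atTop hlow hzero).eventually_gt_atTop 0] with n hn hpos
  have : NeZero n := ⟨hn.ne'⟩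
  rw [le_div_iff₀ (Nat.cast_pos.2 hn), mul_right_comm, mul_assoc]
  simpa only [mul_comm, mul_left_comm] using
    le_EmaxAssign r (pos_of_mul_pos_right hpos n.cast_nonneg)

lemma eventually_EmaxAssign_div_le (m : ℕ → ℕ) (k : ℕ) :
    ∀ᶠ n : ℕ in atTop, EmaxAssign (m n) n / n ≤ k + n * meanCount (m n) n ^ (k + 1) := by
  filter_upwards [eventually_gt_atTop 0] with n hn
  have : NeZero n := ⟨hn.ne'⟩
  rw [div_le_iff₀ (Nat.cast_pos.2 hn)]
  linarith [EmaxAssign_le (n := n) (m n) k]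

lemma le_liminf_EmaxAssign_div {r : ℕ}
    (hlow : Tendsto (fun n : ℕ => n * meanCount (m n) n ^ r) atTop atTop)
    (hzero : Tendsto (fun n => meanCount (m n) n) atTop (nhds 0))
    (hbdd : IsBoundedUnder (· ≤ ·) atTop fun n : ℕ => EmaxAssign (m n) n / (n : ℝ)) :
    (r : ℝ) ≤ liminf (fun n : ℕ => EmaxAssign (m n) n / (n : ℝ)) atTop := by
  have hlim := (tendsto_one_sub_meanCount_sub_sqrt hlow hzero).const_mul (r : ℝ)
  rw [mul_one] at hlim
  rw [← hlim.liminf_eq]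
  exact liminf_le_liminf (eventually_le_EmaxAssign_div hlow hzero) hlim.isBoundedUnder_ge
    hbdd.isCoboundedUnder_ge

lemma isBoundedUnder_EmaxAssign_div {k : ℕ}
    (hup : Tendsto (fun n : ℕ => n * meanCount (m n) n ^ (k + 1)) atTop (nhds 0)) :
    IsBoundedUnder (· ≤ ·) atTop fun n : ℕ => EmaxAssign (m n) n / (n : ℝ) :=
  (hup.const_add (k : ℝ)).isBoundedUnder_le.mono_le (eventually_EmaxAssign_div_le m k)

lemma limsup_EmaxAssign_div_le {k : ℕ}
    (hup : Tendsto (fun n : ℕ => n * meanCount (m n) n ^ (k + 1)) atTop (nhds 0)) :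
    limsup (fun n : ℕ => EmaxAssign (m n) n / (n : ℝ)) atTop ≤ k := by
  have hlim := hup.const_add (k : ℝ)
  rw [add_zero] at hlim
  rw [← hlim.limsup_eq]
  refine limsup_le_limsup (eventually_EmaxAssign_div_le m k) ?_ hlim.isBoundedUnder_le
  exact IsCoboundedUnder.of_frequently_ge (a := 0) (Eventually.of_forall fun n =>
    div_nonneg (EmaxAssign_nonneg (m n) n) n.cast_nonneg).frequently

end Asymptotics

/-- The hypotheses read `n^{-1/r} ≪ m(n) p_n ≪ n^{-1/(k+1)}`. The choice `r = k - 1` allows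
`m(n) p_n` to be of order `n^{-1/k}`, and `r = k` gives `E[max_σ S(σ)] ~ k n` strictly between
two such orders. -/
theorem expected_max_ratherSparse_irregular_general (m : ℕ → ℕ) (r k : ℕ)
    (hlow : Tendsto (fun n : ℕ => n * meanCount (m n) n ^ r) atTop atTop)
    (hup : Tendsto (fun n : ℕ => n * meanCount (m n) n ^ (k + 1)) atTop (nhds 0)) :
    (r : ℝ) ≤ Filter.liminf (fun n : ℕ => EmaxAssign (m n) n / (n : ℝ)) atTop ∧
      Filter.limsup (fun n : ℕ => EmaxAssign (m n) n / (n : ℝ)) atTop ≤ (k : ℝ) := by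
  have hzero := tendsto_zero_of_tendsto_natCast_mul_pow (fun n => meanCount_nonneg (m n) n)
    k.succ_ne_zero hup
  exact ⟨le_liminf_EmaxAssign_div hlow hzero (isBoundedUnder_EmaxAssign_div hup),
    limsup_EmaxAssign_div_le hup⟩

/-- **Rather sparse matrices, irregular case `a = 1/k`.**  If `m(n) p_n = c n^{-1/k} (1 + o(1))`
with `c > 0` and an integer `k ≥ 2`, then
`(k-1) n (1 + o(1)) ≤ E[max_σ ∑ i, X_{i σ(i)}] ≤ k n (1 + o(1))`. -/
theorem expected_max_ratherSparse_irregular (m : ℕ → ℕ) (hm : ∀ n, 0 < m n) (c : ℝ)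
    (hc : 0 < c) (k : ℕ) (hk : 2 ≤ k)
    (hmp : Tendsto
      (fun n : ℕ => ((m n : ℝ) / (n : ℝ) ^ 2) / (c * (n : ℝ) ^ (-(1 / (k : ℝ)))))
      atTop (nhds 1)) :
    (k : ℝ) - 1 ≤ Filter.liminf (fun n : ℕ => EmaxAssign (m n) n / (n : ℝ)) atTop ∧
      Filter.limsup (fun n : ℕ => EmaxAssign (m n) n / (n : ℝ)) atTop ≤ (k : ℝ) := by
  obtain ⟨hlow, hup⟩ := tendsto_natCast_mul_pow_pred_atTop_and_pow_succ_zero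
    (fun n => meanCount_nonneg (m n) n) hc (by omega) hmp
  simpa [Nat.cast_pred (by omega : 0 < k)] using
    expected_max_ratherSparse_irregular_general m (k - 1) k hlow hup

end
end

section
/- In the multinomial assignment setting, suppose m(n) → ∞ and m(n)/n → 0 as n → ∞. Then E[max_{σ ∈ S_n} Σ_{i=1}^n X_{iσ(i)}] = m(n)·(1+o(1)); that is, E[max_σ Σ_i X_{iσ(i)}]/m(n) → 1 as n → ∞. -/
open MeasureTheory Filter Real

noncomputable section

/-!
Only `m` points are placed, so no assignment collects more than `m` of them. Conversely, the points
that share neither their row nor their column with another point form a partial permutation matrix,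
which extends to a permutation collecting all of them. Two given points share their row with
probability `1 / n`, and likewise their column, so a given point fails to be isolated with
probability at most `2 m / n`. Hence `m (1 - 2 m / n) ≤ E[max_σ S(σ)] ≤ m`.
-/

section Probability

variable {Ω : Type*} [MeasurableSpace Ω] {μ : Measure Ω}

theorem integral_card_filter {ι : Type*} [Fintype ι] [IsFiniteMeasure μ] {p : ι → Ω → Prop}
    [∀ ω, DecidablePred fun k => p k ω] (hp : ∀ k, MeasurableSet {ω | p k ω}) :
    ∫ ω, ((Finset.univ.filter fun k => p k ω).card : ℝ) ∂μ = ∑ k, μ.real {ω | p k ω} := by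
  have hcard (ω : Ω) : ((Finset.univ.filter fun k => p k ω).card : ℝ) =
      ∑ k, {ω | p k ω}.indicator 1 ω := by
    simp [Set.indicator_apply]
  simp_rw [hcard]
  rw [integral_finsetSum _ fun k _ => (integrable_const 1).indicator (hp k)]
  exact Finset.sum_congr rfl fun k _ => integral_indicator_one (hp k)

theorem measure_setOf_eq_le_of_indepFun {α : Type*} [MeasurableSpace α] [Countable α]
    [MeasurableSingletonClass α] [IsProbabilityMeasure μ] {X Y : Ω → α}
    (hXY : ProbabilityTheory.IndepFun X Y μ) (hX : Measurable X) {c : ENNReal}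
    (hY : ∀ a, μ (Y ⁻¹' {a}) ≤ c) : μ {ω | X ω = Y ω} ≤ c := by
  have hunion : {ω | X ω = Y ω} = ⋃ a, X ⁻¹' {a} ∩ Y ⁻¹' {a} := by
    ext ω
    simp [eq_comm]
  have hsum : ∑' a, μ (X ⁻¹' {a}) = 1 := by
    have := Measure.isProbabilityMeasure_map (μ := μ) hX.aemeasurable
    simpa [Measure.map_apply hX] using Measure.tsum_indicator_apply_singleton (μ.map X) _ .univ
  calc μ {ω | X ω = Y ω}
      ≤ ∑' a, μ (X ⁻¹' {a} ∩ Y ⁻¹' {a}) := hunion ▸ measure_iUnion_le _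
    _ = ∑' a, μ (X ⁻¹' {a}) * μ (Y ⁻¹' {a}) := tsum_congr fun a =>
        hXY.measure_inter_preimage_eq_mul _ _ (.singleton a) (.singleton a)
    _ ≤ ∑' a, μ (X ⁻¹' {a}) * c := by gcongr with a; exact hY a
    _ = c := by rw [ENNReal.tsum_mul_right, hsum, one_mul]

theorem measure_pi_setOf_apply_eq_le {ι α : Type*} [Fintype ι] [MeasurableSpace α] [Countable α]
    [MeasurableSingletonClass α] [IsProbabilityMeasure μ] {f : Ω → α} (hf : Measurable f)
    {c : ENNReal} (hc : ∀ a, μ (f ⁻¹' {a}) ≤ c) {k l : ι} (hkl : k ≠ l) :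
    Measure.pi (fun _ : ι => μ) {ω | f (ω k) = f (ω l)} ≤ c := by
  have hindep : ProbabilityTheory.iIndepFun (fun k (ω : ι → Ω) => f (ω k))
      (Measure.pi fun _ => μ) := ProbabilityTheory.iIndepFun_pi fun _ => hf.aemeasurable
  refine measure_setOf_eq_le_of_indepFun (hindep.indepFun hkl) (by fun_prop) fun a => ?_
  calc Measure.pi (fun _ : ι => μ) (Function.eval l ⁻¹' (f ⁻¹' {a}))
      = μ (f ⁻¹' {a}) := (measurePreserving_eval _ l).measure_preimage
        (hf (.singleton a)).nullMeasurableSet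
    _ ≤ c := hc a

end Probability

section CellMeasure

theorem cellMeasure_prod (n : ℕ) (s t : Set (Fin n)) :
    cellMeasure n (s ×ˢ t) = (s.encard / n) * (t.encard / n) := by
  rw [cellMeasure, Measure.smul_apply, Measure.count_apply (Set.toFinite _).measurableSet]
  simp only [Set.encard_prod, smul_eq_mul, div_eq_mul_inv, ENNReal.inv_pow]
  push_cast
  ring

variable (n : ℕ) [NeZero n]

instance isProbabilityMeasure_cellMeasure : IsProbabilityMeasure (cellMeasure n) where
  measure_univ := by
    rw [← Set.univ_prod_univ, cellMeasure_prod]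
    simp [ENNReal.div_self, NeZero.ne]

instance isProbabilityMeasure_gridMeasure (m : ℕ) : IsProbabilityMeasure (gridMeasure m n) :=
  inferInstanceAs (IsProbabilityMeasure (Measure.pi _))

theorem cellMeasure_fst_preimage_singleton (i : Fin n) :
    cellMeasure n (Prod.fst ⁻¹' {i}) = (n : ENNReal)⁻¹ := by
  rw [← Set.prod_univ, cellMeasure_prod]
  simp [ENNReal.div_self, NeZero.ne]

theorem cellMeasure_snd_preimage_singleton (j : Fin n) :
    cellMeasure n (Prod.snd ⁻¹' {j}) = (n : ENNReal)⁻¹ := by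
  rw [← Set.univ_prod, cellMeasure_prod]
  simp [ENNReal.div_self, NeZero.ne]

end CellMeasure

section Assignment

variable {m n : ℕ}

theorem assignSum_eq_card (σ : Equiv.Perm (Fin n)) (ω : Fin m → Fin n × Fin n) :
    assignSum σ ω = (Finset.univ.filter fun k => σ (ω k).1 = (ω k).2).card := by
  have hfiber (i : Fin n) : cellCount i (σ i) ω =
      ((Finset.univ.filter fun k => σ (ω k).1 = (ω k).2).filter fun k => (ω k).1 = i).card := by
    unfold cellCount
    congr 1
    ext k
    simp only [Finset.mem_filter, Finset.mem_univ, true_and, Prod.ext_iff]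
    grind
  simp only [assignSum, hfiber]
  exact_mod_cast (Finset.card_eq_sum_card_fiberwise fun _ _ => Finset.mem_univ _).symm

theorem assignSum_le_maxAssign (σ : Equiv.Perm (Fin n)) (ω : Fin m → Fin n × Fin n) :
    assignSum σ ω ≤ maxAssign ω :=
  le_ciSup (f := fun σ => assignSum σ ω) (Set.finite_range _).bddAbove σ

theorem maxAssign_le_s8 (ω : Fin m → Fin n × Fin n) : maxAssign ω ≤ m := by
  refine ciSup_le fun σ => ?_
  rw [assignSum_eq_card]
  exact_mod_cast (Finset.card_le_univ _).trans_eq (Fintype.card_fin m)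

theorem card_le_maxAssign {ω : Fin m → Fin n × Fin n} {s : Finset (Fin m)}
    (hrow : Set.InjOn (fun k => (ω k).1) s) (hcol : Set.InjOn (fun k => (ω k).2) s) :
    (s.card : ℝ) ≤ maxAssign ω := by
  obtain ⟨σ, hσ⟩ := Equiv.Perm.exists_extending_pair _ _ hrow.injective hcol.injective
  have hsub : s ⊆ Finset.univ.filter fun k => σ (ω k).1 = (ω k).2 := fun k hk => by
    simpa using hσ ⟨k, hk⟩
  calc (s.card : ℝ) ≤ assignSum σ ω := by
        rw [assignSum_eq_card]
        exact_mod_cast Finset.card_le_card hsub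
    _ ≤ maxAssign ω := assignSum_le_maxAssign σ ω

end Assignment

section Isolated

/-- The `k`-th point of the configuration `ω` is isolated if no other point lies in its row or in
its column; a single assignment can collect all isolated points. Points are compared by index, so
two points in the same cell are not isolated. -/
def IsIsolated {ι α β : Type*} (ω : ι → α × β) (k : ι) : Prop :=
  ∀ l, l ≠ k → (ω k).1 ≠ (ω l).1 ∧ (ω k).2 ≠ (ω l).2

open Classical in
theorem card_isIsolated_le_maxAssign {m n : ℕ} (ω : Fin m → Fin n × Fin n) :
    ((Finset.univ.filter (IsIsolated ω)).card : ℝ) ≤ maxAssign ω := by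
  apply card_le_maxAssign <;> intro k hk l _ hkl <;> by_contra hne
  · exact ((Finset.mem_filter.1 hk).2 l (Ne.symm hne)).1 hkl
  · exact ((Finset.mem_filter.1 hk).2 l (Ne.symm hne)).2 hkl

variable {m : ℕ} (n : ℕ) [NeZero n]

theorem gridMeasure_collision_le {k l : Fin m} (hkl : k ≠ l) :
    gridMeasure m n {ω | (ω k).1 = (ω l).1 ∨ (ω k).2 = (ω l).2} ≤ 2 / n := by
  calc gridMeasure m n {ω | (ω k).1 = (ω l).1 ∨ (ω k).2 = (ω l).2}
      ≤ gridMeasure m n {ω | (ω k).1 = (ω l).1} + gridMeasure m n {ω | (ω k).2 = (ω l).2} :=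
        measure_union_le _ _
    _ ≤ (n : ENNReal)⁻¹ + (n : ENNReal)⁻¹ := add_le_add
        (measure_pi_setOf_apply_eq_le measurable_fst
          (fun i => (cellMeasure_fst_preimage_singleton n i).le) hkl)
        (measure_pi_setOf_apply_eq_le measurable_snd
          (fun j => (cellMeasure_snd_preimage_singleton n j).le) hkl)
    _ = 2 / n := by rw [← two_mul, div_eq_mul_inv]

theorem gridMeasure_not_isIsolated_le (k : Fin m) :
    gridMeasure m n {ω | ¬ IsIsolated ω k} ≤ m * (2 / n) := by
  have hcover : {ω : Fin m → Fin n × Fin n | ¬ IsIsolated ω k} ⊆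
      ⋃ l ∈ Finset.univ.erase k, {ω | (ω k).1 = (ω l).1 ∨ (ω k).2 = (ω l).2} := by
    intro ω hω
    simpa [IsIsolated, or_iff_not_imp_left] using hω
  calc gridMeasure m n {ω | ¬ IsIsolated ω k}
      ≤ ∑ l ∈ Finset.univ.erase k,
          gridMeasure m n {ω | (ω k).1 = (ω l).1 ∨ (ω k).2 = (ω l).2} :=
        (measure_mono hcover).trans (measure_biUnion_finset_le _ _)
    _ ≤ ∑ _l ∈ Finset.univ.erase k, 2 / (n : ENNReal) := Finset.sum_le_sum fun l hl =>
        gridMeasure_collision_le n (Finset.ne_of_mem_erase hl).symm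
    _ ≤ ∑ _l : Fin m, 2 / (n : ENNReal) :=
        Finset.sum_le_sum_of_subset (Finset.erase_subset k _)
    _ = m * (2 / n) := by simp

theorem le_gridMeasure_real_isIsolated (k : Fin m) :
    1 - 2 * ((m : ℝ) / n) ≤ (gridMeasure m n).real {ω | IsIsolated ω k} := by
  have hcompl : (gridMeasure m n).real {ω | ¬ IsIsolated ω k} =
      1 - (gridMeasure m n).real {ω | IsIsolated ω k} :=
    probReal_compl_eq_one_sub (Set.toFinite _).measurableSet
  have hbound : (gridMeasure m n).real {ω | ¬ IsIsolated ω k} ≤ 2 * ((m : ℝ) / n) := by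
    calc (gridMeasure m n).real {ω | ¬ IsIsolated ω k}
        ≤ (m * (2 / n) : ENNReal).toReal :=
          ENNReal.toReal_mono (by finiteness [NeZero.ne n]) (gridMeasure_not_isIsolated_le n k)
      _ = 2 * ((m : ℝ) / n) := by simp [mul_div_left_comm]
  linarith

end Isolated

section Expectation

variable (m n : ℕ) [NeZero n]

theorem EmaxAssign_le_s8 : EmaxAssign m n ≤ m :=
  calc EmaxAssign m n ≤ ∫ _, (m : ℝ) ∂gridMeasure m n :=
        integral_mono .of_finite .of_finite maxAssign_le_s8
    _ = m := by simp

open Classical in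
theorem mul_one_sub_le_EmaxAssign : m * (1 - 2 * ((m : ℝ) / n)) ≤ EmaxAssign m n :=
  calc (m : ℝ) * (1 - 2 * ((m : ℝ) / n))
      = ∑ _k : Fin m, (1 - 2 * ((m : ℝ) / n)) := by
        rw [Finset.sum_const, Finset.card_univ, Fintype.card_fin, nsmul_eq_mul]
    _ ≤ ∑ k : Fin m, (gridMeasure m n).real {ω | IsIsolated ω k} :=
        Finset.sum_le_sum fun k _ => le_gridMeasure_real_isIsolated n k
    _ = ∫ ω, ((Finset.univ.filter (IsIsolated ω)).card : ℝ) ∂gridMeasure m n :=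
        (integral_card_filter fun _ => (Set.toFinite _).measurableSet).symm
    _ ≤ EmaxAssign m n := integral_mono .of_finite .of_finite card_isIsolated_le_maxAssign

end Expectation

theorem expected_max_verySparse_general (m : ℕ → ℕ) (hm : ∀ᶠ n in atTop, 0 < m n)
    (hmn : Tendsto (fun n : ℕ => (m n : ℝ) / (n : ℝ)) atTop (nhds 0)) :
    Tendsto (fun n : ℕ => EmaxAssign (m n) n / (m n : ℝ)) atTop (nhds 1) := by
  have hlower : Tendsto (fun n : ℕ => 1 - 2 * ((m n : ℝ) / (n : ℝ))) atTop (nhds 1) := by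
    simpa using (hmn.const_mul 2).const_sub 1
  have hbounds : ∀ᶠ n in atTop, 1 - 2 * ((m n : ℝ) / (n : ℝ)) ≤ EmaxAssign (m n) n / (m n : ℝ) ∧
      EmaxAssign (m n) n / (m n : ℝ) ≤ 1 := by
    filter_upwards [eventually_ne_atTop 0, hm] with n hn hmpos
    have : NeZero n := ⟨hn⟩
    have hmpos' : (0 : ℝ) < m n := Nat.cast_pos.2 hmpos
    rw [le_div_iff₀' hmpos', div_le_one hmpos']
    exact ⟨mul_one_sub_le_EmaxAssign (m n) n, EmaxAssign_le_s8 (m n) n⟩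
  exact tendsto_of_tendsto_of_tendsto_of_le_of_le' hlower tendsto_const_nhds
    (hbounds.mono fun _ h => h.1) (hbounds.mono fun _ h => h.2)

/-- **Very sparse matrices.**  If `1 ≪ m(n) ≪ n`, then
`E[max_σ ∑ i, X_{i σ(i)}] = m(n) (1 + o(1))`. -/
theorem expected_max_verySparse (m : ℕ → ℕ) (hm : ∀ n, 0 < m n)
    (hm_top : Tendsto (fun n : ℕ => (m n : ℝ)) atTop atTop)
    (hmn : Tendsto (fun n : ℕ => (m n : ℝ) / (n : ℝ)) atTop (nhds 0)) :
    Tendsto (fun n : ℕ => EmaxAssign (m n) n / (m n : ℝ)) atTop (nhds 1) :=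
  expected_max_verySparse_general m (.of_forall hm) hmn

end
end

section
/- For each n, let (X_j^{(n)})_{1≤j≤n} be negatively associated random variables, each with the binomial distribution B(m(n), p(n)), where the parameters satisfy m(n)·p(n)/log n → c for some constant c > 1 and p(n)·log n → 0 as n → ∞. Let H̃* = H̃*(c) be the unique H ∈ (0,1) with H log H − (H−1) = 1/c. Then E[min_{1≤j≤n} X_j^{(n)}] = c·H̃*·log n·(1+o(1)); that is, E[min_{1≤j≤n} X_j^{(n)}]/(c·H̃*·log n) → 1 as n → ∞. -/
open MeasureTheory Filter Real

noncomputable section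

/-- The binomial distribution `B(m, p)` as a measure on `ℝ`:
it assigns mass `C(m,k) pᵏ (1-p)^{m-k}` to the point `k`, for `0 ≤ k ≤ m`. -/
def binomialMeasure (m : ℕ) (p : ℝ) : Measure ℝ :=
  ∑ k ∈ Finset.range (m + 1),
    ENNReal.ofReal ((m.choose k : ℝ) * p ^ k * (1 - p) ^ (m - k)) • Measure.dirac (k : ℝ)

/-- Random variables `X_i`, `i : ι`, are *negatively associated* if for every pair of disjoint
finite index sets `I`, `J` and every pair of bounded measurable coordinatewise nondecreasing
functions `f`, `g`, one has `Cov(f(X_I), g(X_J)) ≤ 0`, i.e.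
`E[f(X_I) g(X_J)] ≤ E[f(X_I)] E[g(X_J)]`. -/
def NegativelyAssociated {Ω : Type*} [MeasurableSpace Ω] (μ : Measure Ω)
    {ι : Type*} (X : ι → Ω → ℝ) : Prop :=
  ∀ I J : Finset ι, Disjoint I J →
    ∀ f : (I → ℝ) → ℝ, ∀ g : (J → ℝ) → ℝ,
      Measurable f → Measurable g → Monotone f → Monotone g →
      (∃ C, ∀ x, |f x| ≤ C) → (∃ C, ∀ x, |g x| ≤ C) →
      ∫ ω, f (fun i => X i.1 ω) * g (fun j => X j.1 ω) ∂μ ≤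
        (∫ ω, f (fun i => X i.1 ω) ∂μ) * ∫ ω, g (fun j => X j.1 ω) ∂μ

/-!
Write `M = m p`. The lower tail of `B(m, p)` has Poisson rate `klFun H = H log H + 1 - H`: by
Chernoff `P(X ≤ H M) ≤ exp (-M klFun H)`, and by Stirling, as `p → 0` and `M → ∞`, the single
point `⌊H M⌋` already has mass at least `exp (-M r)` for every `r > klFun H`. With
`M ∼ c log n`, the expected number of variables below `H M` thus tends to `0` or to `∞` according
to whether `c klFun H > 1` or `c klFun H < 1`.

In the first case the union bound and Markov's inequality bound the expected minimum below by
`H M (1 - o(1))`. In the second, the minimum is at most `H M` plus one of the variables restricted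
to the event that all the others exceed `H M`; negative association bounds the expectation of that
term by `M P(X > H M) ^ (n - 1) = o(M)`. As `klFun` is strictly decreasing on `[0, 1]` and equals
`1 / c` at `Hstar`, letting `H` tend to `Hstar` from either side gives the limit.
-/

section

open ProbabilityTheory InformationTheory Topology

section NegativelyAssociated

variable {Ω ι : Type*} [MeasurableSpace Ω] {μ : Measure Ω} {X : ι → Ω → ℝ}

theorem NegativelyAssociated.integral_mul_prod_le (hX : NegativelyAssociated μ X)
    {g : ℝ → ℝ} (hg_meas : Measurable g) (hg_mono : Monotone g)
    (hg_nonneg : ∀ x, 0 ≤ g x) {B : ℝ} (hg_le : ∀ x, g x ≤ B)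
    {f : ι → ℝ → ℝ} (hf_meas : ∀ i, Measurable (f i)) (hf_mono : ∀ i, Monotone (f i))
    (hf_nonneg : ∀ i x, 0 ≤ f i x) {C : ι → ℝ} (hf_le : ∀ i x, f i x ≤ C i)
    {a : ι} {S : Finset ι} (ha : a ∉ S) :
    ∫ ω, g (X a ω) * ∏ i ∈ S, f i (X i ω) ∂μ ≤
      (∫ ω, g (X a ω) ∂μ) * ∫ ω, ∏ i ∈ S, f i (X i ω) ∂μ := by
  have hcov := hX {a} S (Finset.disjoint_singleton_left.2 ha)
    (fun x => g (x ⟨a, Finset.mem_singleton_self a⟩)) (fun x => ∏ i : S, f i (x i))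
    (by fun_prop) (by fun_prop) (fun x y hxy => hg_mono (hxy _))
    (fun x y hxy => Finset.prod_le_prod (fun i _ => hf_nonneg i _) fun i _ => hf_mono i (hxy i))
    ⟨B, fun x => (abs_of_nonneg (hg_nonneg _)).trans_le (hg_le _)⟩
    ⟨∏ i : S, C i, fun x => by
      rw [Finset.abs_prod]
      exact Finset.prod_le_prod (fun i _ => abs_nonneg _) fun i _ =>
        (abs_of_nonneg (hf_nonneg i _)).trans_le (hf_le i _)⟩
  have hcoe : ∀ ω, ∏ i : S, f i (X i ω) = ∏ i ∈ S, f i (X i ω) := fun ω =>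
    Finset.prod_coe_sort S fun i => f i (X i ω)
  simpa only [hcoe] using hcov

theorem NegativelyAssociated.integral_prod_le [IsProbabilityMeasure μ]
    (hX : NegativelyAssociated μ X)
    {f : ι → ℝ → ℝ} (hf_meas : ∀ i, Measurable (f i)) (hf_mono : ∀ i, Monotone (f i))
    (hf_nonneg : ∀ i x, 0 ≤ f i x) {C : ι → ℝ} (hf_le : ∀ i x, f i x ≤ C i) (S : Finset ι) :
    ∫ ω, ∏ i ∈ S, f i (X i ω) ∂μ ≤ ∏ i ∈ S, ∫ ω, f i (X i ω) ∂μ := by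
  classical
  induction S using Finset.induction_on with
  | empty => simp
  | insert a S ha ih =>
    simp only [Finset.prod_insert ha]
    exact (hX.integral_mul_prod_le (hf_meas a) (hf_mono a) (hf_nonneg a) (hf_le a)
      hf_meas hf_mono hf_nonneg hf_le ha).trans
        (mul_le_mul_of_nonneg_left ih (integral_nonneg fun ω => hf_nonneg a _))

theorem nullMeasurableSet_forall_mem_lt (hX : ∀ i, AEMeasurable (X i) μ) (S : Finset ι) (t : ℝ) :
    NullMeasurableSet {ω | ∀ i ∈ S, t < X i ω} μ := by
  simp only [Set.ofPred_forall]
  exact .biInter S.countable_toSet fun i _ => nullMeasurableSet_lt aemeasurable_const (hX i)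

theorem monotone_indicator_Ioi_one (t : ℝ) : Monotone ((Set.Ioi t).indicator (1 : ℝ → ℝ)) :=
  fun x y hxy => Set.indicator_apply_le' (fun hx => by simp [lt_of_lt_of_le hx hxy])
    fun _ => Set.indicator_nonneg (fun _ _ => zero_le_one) y

theorem integral_indicator_Ioi_one_comp {Y : Ω → ℝ} (hY : AEMeasurable Y μ) (t : ℝ) :
    ∫ ω, (Set.Ioi t).indicator 1 (Y ω) ∂μ = μ.real {ω | t < Y ω} :=
  (integral_indicator₀ (nullMeasurableSet_lt aemeasurable_const hY)).trans (by simp)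

theorem NegativelyAssociated.setIntegral_forall_mem_lt_le [IsProbabilityMeasure μ]
    (hNA : NegativelyAssociated μ X) (hX : ∀ i, AEMeasurable (X i) μ)
    {a : ι} {C : ℝ} (ha : ∀ᵐ ω ∂μ, X a ω ∈ Set.Icc 0 C)
    {S : Finset ι} (haS : a ∉ S) (t : ℝ) :
    ∫ ω in {ω | ∀ i ∈ S, t < X i ω}, X a ω ∂μ ≤
      (∫ ω, X a ω ∂μ) * ∏ i ∈ S, μ.real {ω | t < X i ω} := by
  -- Negative association only speaks of bounded functions, so `X a` is truncated to `[0, C]`.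
  let trunc : ℝ → ℝ := fun x => max 0 (min x C)
  have htrunc_meas : Measurable trunc := by fun_prop
  have htrunc_mono : Monotone trunc := fun x y hxy => by dsimp only [trunc]; gcongr
  have htrunc_nonneg : ∀ x, 0 ≤ trunc x := fun x => le_max_left _ _
  have htrunc_le : ∀ x, trunc x ≤ max 0 C := fun x => max_le_max le_rfl (min_le_right _ _)
  have htrunc : ∀ᵐ ω ∂μ, trunc (X a ω) = X a ω := by
    filter_upwards [ha] with ω hω
    simp only [trunc, min_eq_left hω.2, max_eq_right hω.1]
  let above : ℝ → ℝ := (Set.Ioi t).indicator 1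
  have habove_meas : Measurable above := measurable_one.indicator measurableSet_Ioi
  have habove_nonneg : ∀ x, 0 ≤ above x := Set.indicator_nonneg fun _ _ => zero_le_one
  have habove_le : ∀ x, above x ≤ 1 := Set.indicator_le_self' fun _ _ => zero_le_one
  have hindicator : ∀ ω, {ω | ∀ i ∈ S, t < X i ω}.indicator (X a) ω =
      X a ω * ∏ i ∈ S, above (X i ω) := fun ω => by
    simp [Set.indicator_apply, above, Finset.prod_ite_zero]
  calc ∫ ω in {ω | ∀ i ∈ S, t < X i ω}, X a ω ∂μ
      = ∫ ω, trunc (X a ω) * ∏ i ∈ S, above (X i ω) ∂μ := by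
        rw [← integral_indicator₀ (nullMeasurableSet_forall_mem_lt hX S t)]
        refine integral_congr_ae ?_
        filter_upwards [htrunc] with ω hω
        rw [hindicator, hω]
    _ ≤ (∫ ω, trunc (X a ω) ∂μ) * ∫ ω, ∏ i ∈ S, above (X i ω) ∂μ :=
        hNA.integral_mul_prod_le htrunc_meas htrunc_mono htrunc_nonneg htrunc_le
          (fun _ => habove_meas) (fun _ => monotone_indicator_Ioi_one t) (fun _ => habove_nonneg)
          (fun _ => habove_le) haS
    _ ≤ (∫ ω, trunc (X a ω) ∂μ) * ∏ i ∈ S, ∫ ω, above (X i ω) ∂μ :=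
        mul_le_mul_of_nonneg_left (hNA.integral_prod_le (fun _ => habove_meas)
          (fun _ => monotone_indicator_Ioi_one t) (fun _ => habove_nonneg) (fun _ => habove_le) S)
          (integral_nonneg fun ω => htrunc_nonneg _)
    _ = (∫ ω, X a ω ∂μ) * ∏ i ∈ S, μ.real {ω | t < X i ω} := by
        rw [integral_congr_ae htrunc]
        simp only [above, integral_indicator_Ioi_one_comp (hX _)]

end NegativelyAssociated

section Minimum

variable {Ω ι : Type*} [MeasurableSpace Ω] {μ : Measure Ω} [Nonempty ι] {X : ι → Ω → ℝ}

theorem integrable_iInf [Finite ι] (hX : ∀ i, Integrable (X i) μ) :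
    Integrable (fun ω => ⨅ i, X i ω) μ := by
  cases nonempty_fintype ι
  refine (integrable_finsetSum Finset.univ fun i _ => (hX i).norm).mono'
    (AEMeasurable.iInf fun i => (hX i).aemeasurable).aestronglyMeasurable (ae_of_all _ fun ω => ?_)
  obtain ⟨i, hi⟩ := exists_eq_ciInf_of_finite (f := fun i => X i ω)
  rw [← hi]
  exact Finset.single_le_sum (f := fun i => ‖X i ω‖) (fun _ _ => norm_nonneg _) (Finset.mem_univ i)

variable [Fintype ι] [IsProbabilityMeasure μ]

theorem mul_one_sub_sum_le_integral_iInf (hX : ∀ i, Integrable (X i) μ)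
    (hX_nonneg : ∀ i, 0 ≤ᵐ[μ] X i) {t : ℝ} (ht : 0 ≤ t) :
    t * (1 - ∑ i, μ.real {ω | X i ω ≤ t}) ≤ ∫ ω, ⨅ i, X i ω ∂μ := by
  have hcover : {ω | t ≤ ⨅ i, X i ω} ∪ ⋃ i, {ω | X i ω ≤ t} = Set.univ := by
    refine Set.eq_univ_of_forall fun ω => or_iff_not_imp_right.2 fun hω => ?_
    simp only [Set.mem_iUnion, Set.mem_ofPred_eq, not_exists, not_le] at hω
    exact le_ciInf fun i => (hω i).le
  have hunion : 1 - ∑ i, μ.real {ω | X i ω ≤ t} ≤ μ.real {ω | t ≤ ⨅ i, X i ω} := by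
    rw [sub_le_iff_le_add, ← probReal_univ (μ := μ), ← hcover]
    exact (measureReal_union_le _ _).trans (by gcongr; exact measureReal_iUnion_fintype_le _)
  have hinf_nonneg : 0 ≤ᵐ[μ] fun ω => ⨅ i, X i ω := by
    filter_upwards [ae_all_iff.2 hX_nonneg] with ω hω using le_ciInf hω
  exact (mul_le_mul_of_nonneg_left hunion ht).trans
    (mul_meas_ge_le_integral_of_nonneg hinf_nonneg (integrable_iInf hX) t)

theorem NegativelyAssociated.integral_iInf_le [DecidableEq ι] (hNA : NegativelyAssociated μ X)
    (hX : ∀ i, Integrable (X i) μ) (a : ι) {C : ℝ} (ha : ∀ᵐ ω ∂μ, X a ω ∈ Set.Icc 0 C)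
    {t : ℝ} (ht : 0 ≤ t) :
    ∫ ω, ⨅ i, X i ω ∂μ ≤
      t + (∫ ω, X a ω ∂μ) * ∏ i ∈ Finset.univ.erase a, μ.real {ω | t < X i ω} := by
  set S := Finset.univ.erase a
  set A := {ω | ∀ i ∈ S, t < X i ω}
  have hA : NullMeasurableSet A μ :=
    nullMeasurableSet_forall_mem_lt (fun i => (hX i).aemeasurable) S t
  have hpointwise : ∀ ω, ⨅ i, X i ω ≤ t + A.indicator (X a) ω := fun ω => by
    have hinf : ∀ i, ⨅ j, X j ω ≤ X i ω := ciInf_le (Set.finite_range _).bddBelow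
    by_cases hωA : ω ∈ A
    · rw [Set.indicator_of_mem hωA]
      linarith [hinf a]
    · obtain ⟨i, -, hi⟩ : ∃ i ∈ S, X i ω ≤ t := by simpa [A] using hωA
      rw [Set.indicator_of_notMem hωA]
      linarith [hinf i]
  calc ∫ ω, ⨅ i, X i ω ∂μ
      ≤ ∫ ω, (t + A.indicator (X a) ω) ∂μ :=
        integral_mono (integrable_iInf hX)
          ((integrable_const t).add ((hX a).indicator₀ hA)) hpointwise
    _ = t + ∫ ω in A, X a ω ∂μ := by
        rw [integral_add (integrable_const t) ((hX a).indicator₀ hA), integral_const,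
          probReal_univ, one_smul, integral_indicator₀ hA]
    _ ≤ _ := by
        gcongr
        exact hNA.setIntegral_forall_mem_lt_le (fun i => (hX i).aemeasurable) ha
          (Finset.notMem_erase a _) t

end Minimum

section Binomial

theorem binomialMeasure_eq_map_binomial (m : ℕ) {p : ℝ} (hp : p ∈ unitInterval) :
    binomialMeasure m p = Bin(ℝ, m, ⟨p, hp⟩) := by
  rw [map_cast_binomial_eq_sum_dirac, binomialMeasure]
  exact Finset.sum_congr (by ext; simp) fun _ _ => rfl

variable (m : ℕ) (p : unitInterval)

theorem ae_map_cast_binomial_mem_Icc : ∀ᵐ x ∂Bin(ℝ, m, p), x ∈ Set.Icc (0 : ℝ) m := by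
  refine (ae_map_iff (p := (· ∈ Set.Icc (0 : ℝ) m)) (by fun_prop) measurableSet_Icc).2 ?_
  filter_upwards [ae_le_of_hasLaw_binomial (HasLaw.id (μ := Bin(m, p)))] with k hk
  exact ⟨k.cast_nonneg, Nat.cast_le.2 hk⟩

theorem integral_id_map_cast_binomial : ∫ x, x ∂Bin(ℝ, m, p) = m * p := by
  have hbernstein := congrArg (Polynomial.eval (p : ℝ)) (bernsteinPolynomial.sum_smul ℝ m)
  simp only [Polynomial.eval_finsetSum, bernsteinPolynomial, nsmul_eq_mul, Polynomial.eval_mul,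
    Polynomial.eval_natCast, Polynomial.eval_pow, Polynomial.eval_X, Polynomial.eval_sub,
    Polynomial.eval_one] at hbernstein
  rw [integral_map_cast_binomial, ← hbernstein]
  exact Finset.sum_congr (by ext; simp) fun k _ => by rw [smul_eq_mul]; ring

theorem mgf_id_map_cast_binomial (t : ℝ) :
    mgf id Bin(ℝ, m, p) t = (p * exp t + (1 - p)) ^ m := by
  rw [mgf, integral_map_cast_binomial, add_pow]
  refine Finset.sum_congr (by ext; simp) fun k _ => ?_
  rw [smul_eq_mul, id, mul_comm t, exp_nat_mul]
  ring

variable {m p} in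
theorem map_cast_binomial_real_Ioi_le {k : ℕ} {t : ℝ} (hk : k ≤ t) :
    Bin(ℝ, m, p).real (Set.Ioi t) ≤ 1 - Bin(ℝ, m, p).real {(k : ℝ)} := by
  rw [← probReal_compl_eq_one_sub (measurableSet_singleton _)]
  exact measureReal_mono fun x hx => (hk.trans_lt hx).ne'

theorem map_cast_binomial_real_Iic_le {H : ℝ} (hH0 : 0 < H) (hH1 : H ≤ 1) :
    Bin(ℝ, m, p).real (Set.Iic (H * (m * p))) ≤ exp (-(m * p * klFun H)) := by
  have hmgf : mgf id Bin(ℝ, m, p) (log H) ≤ exp (m * -(p * (1 - H))) := by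
    rw [mgf_id_map_cast_binomial, exp_log hH0, exp_nat_mul]
    refine pow_le_pow_left₀ (by have := p.2.1; have := p.2.2; nlinarith) ?_ m
    linarith [add_one_le_exp (-(p * (1 - H)))]
  calc Bin(ℝ, m, p).real (Set.Iic (H * (m * p)))
      ≤ exp (-log H * (H * (m * p))) * mgf id Bin(ℝ, m, p) (log H) :=
        measure_le_le_exp_mul_mgf _ (log_nonpos hH0.le hH1) (integrable_map_cast_binomial _)
    _ ≤ exp (-log H * (H * (m * p))) * exp (m * -(p * (1 - H))) := by gcongr
    _ = exp (-(m * p * klFun H)) := by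
        rw [← exp_add, klFun_apply]
        ring_nf

theorem log_factorial_le {k : ℕ} (hk : k ≠ 0) :
    log k.factorial ≤ k * log k - k + log k / 2 + 1 := by
  have hseq : log (Stirling.stirlingSeq k) ≤ 1 - log 2 / 2 := by
    obtain ⟨k, rfl⟩ := Nat.exists_eq_succ_of_ne_zero hk
    refine (Stirling.log_stirlingSeq'_antitone k.zero_le).trans_eq ?_
    simp [Stirling.stirlingSeq_one, log_div, log_sqrt]
  have hk0 : (k : ℝ) ≠ 0 := Nat.cast_ne_zero.2 hk
  rw [Stirling.log_stirlingSeq_formula, log_mul two_ne_zero hk0, log_div hk0 (exp_ne_zero 1),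
    log_exp] at hseq
  linarith

variable {m p} in
theorem le_map_cast_binomial_real_singleton {k : ℕ} (hkm : k ≤ m) :
    ((m - k) * p : ℝ) ^ k / k.factorial * (1 - p) ^ m ≤ Bin(ℝ, m, p).real {(k : ℝ)} := by
  have hp0 : (0 : ℝ) ≤ p := p.2.1
  have hp1 : (0 : ℝ) ≤ 1 - p := sub_nonneg.2 p.2.2
  have hkm' : (k : ℝ) ≤ m := Nat.cast_le.2 hkm
  have hchoose : (m - k : ℝ) ^ k / k.factorial ≤ m.choose k := by
    refine le_trans ?_ (Nat.pow_le_choose k m)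
    gcongr
    rw [Nat.cast_sub (by lia)]
    push_cast
    linarith
  calc ((m - k) * p : ℝ) ^ k / k.factorial * (1 - p) ^ m
      = (m - k : ℝ) ^ k / k.factorial * p ^ k * (1 - p) ^ m := by rw [mul_pow]; ring
    _ ≤ m.choose k * p ^ k * (1 - p) ^ (m - k) := by
        gcongr ?_ * _ * ?_
        exact pow_le_pow_of_le_one hp1 (by linarith) (Nat.sub_le m k)
    _ = Bin(ℝ, m, p).real {(k : ℝ)} := (map_cast_binomial_real_singleton m k p).symm

variable {m p} in
theorem exp_le_map_cast_binomial_real_singleton {k : ℕ} (hk : k ≠ 0) (hkm : k < m)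
    (hp0 : (0 : ℝ) < p) (hp1 : (p : ℝ) < 1) :
    exp (k * (log (m * p / k) + log (1 - k / m) + 1) - log k / 2 - 1 - m * p / (1 - p)) ≤
      Bin(ℝ, m, p).real {(k : ℝ)} := by
  have hk0 : (0 : ℝ) < k := Nat.cast_pos.2 (Nat.pos_of_ne_zero hk)
  have hkm' : (0 : ℝ) < m - k := sub_pos.2 (Nat.cast_lt.2 hkm)
  have hm0 : (0 : ℝ) < m := by linarith
  have hq0 : (0 : ℝ) < 1 - p := sub_pos.2 hp1
  have hpower : -(m * p / (1 - p) : ℝ) ≤ m * log (1 - p) := by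
    refine (mul_le_mul_of_nonneg_left (one_sub_inv_le_log_of_pos hq0) hm0.le).trans_eq' ?_
    field_simp
    ring
  have hlog_sub : log (1 - k / m) = log (m - k) - log m := by
    rw [one_sub_div hm0.ne', log_div hkm'.ne' hm0.ne']
  refine le_trans ?_ (le_map_cast_binomial_real_singleton hkm.le)
  rw [← le_log_iff_exp_le (by positivity)]
  calc k * (log (m * p / k) + log (1 - k / m) + 1) - log k / 2 - 1 - m * p / (1 - p)
      ≤ k * (log (m - k) + log p) - log k.factorial + m * log (1 - p) := by
        rw [hlog_sub, log_div (by positivity) hk0.ne', log_mul hm0.ne' hp0.ne']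
        linarith [log_factorial_le hk]
    _ = log (((m - k) * p : ℝ) ^ k / k.factorial * (1 - p) ^ m) := by
        rw [log_mul (by positivity) (by positivity), log_div (by positivity) (by positivity),
          log_pow, log_pow, log_mul hkm'.ne' hp0.ne']

end Binomial

section Asymptotics

theorem tendsto_zero_of_tendsto_mul_atTop {α : Type*} {l : Filter α} {f g : α → ℝ} {a : ℝ}
    (hfg : Tendsto (fun x => f x * g x) l (𝓝 a)) (hg : Tendsto g l atTop) :
    Tendsto f l (𝓝 0) := by
  refine (hfg.div_atTop hg).congr' ?_
  filter_upwards [hg.eventually_ne_atTop 0] with x hx using mul_div_cancel_right₀ _ hx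

variable {α : Type*} {l : Filter α} {m k : α → ℕ} {p : α → unitInterval} {H : ℝ}

theorem tendsto_binomial_exponent_div (hmp : Tendsto (fun x => (m x * p x : ℝ)) l atTop)
    (hp : Tendsto (fun x => (p x : ℝ)) l (𝓝 0)) (hH : 0 < H)
    (hk : Tendsto (fun x => (k x / (m x * p x) : ℝ)) l (𝓝 H)) :
    Tendsto (fun x => (k x * (log (m x * p x / k x) + log (1 - k x / m x) + 1) - log (k x) / 2 - 1
      - m x * p x / (1 - p x)) / (m x * p x)) l (𝓝 (-klFun H)) := by
  have hmp_ne : ∀ᶠ x in l, (m x * p x : ℝ) ≠ 0 := hmp.eventually_ne_atTop 0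
  have hk_atTop : Tendsto (fun x => (k x : ℝ)) l atTop := by
    refine (hk.pos_mul_atTop hH hmp).congr' ?_
    filter_upwards [hmp_ne] with x hx using div_mul_cancel₀ _ hx
  have hratio : Tendsto (fun x => (k x / m x : ℝ)) l (𝓝 0) := by
    rw [← mul_zero H]
    refine (hk.mul hp).congr' ?_
    filter_upwards [hmp_ne] with x hx
    have := right_ne_zero_of_mul hx
    field_simp
  have hlog_scale : Tendsto (fun x => log (m x * p x / k x)) l (𝓝 (-log H)) := by
    rw [← log_inv]
    simpa only [inv_div] using (hk.inv₀ hH.ne').log (inv_ne_zero hH.ne')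
  have hlog_ratio : Tendsto (fun x => log (1 - k x / m x)) l (𝓝 0) := by
    simpa using (hratio.const_sub 1).log (by norm_num)
  have hlog_div : Tendsto (fun x => log (k x) / k x) l (𝓝 0) :=
    isLittleO_log_id_atTop.tendsto_div_nhds_zero.comp hk_atTop
  have hodds : Tendsto (fun x => (1 - p x : ℝ)⁻¹) l (𝓝 1) := by
    simpa using (hp.const_sub 1).inv₀ (by norm_num)
  have hlim := (((hk.mul ((hlog_scale.add hlog_ratio).add_const 1)).sub
    ((hk.mul hlog_div).div_const 2)).sub hmp.inv_tendsto_atTop).sub hodds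
  rw [show -klFun H = H * (-log H + 0 + 1) - H * 0 / 2 - 0 - 1 by rw [klFun_apply]; ring]
  refine hlim.congr' ?_
  filter_upwards [hmp_ne, hk_atTop.eventually_ne_atTop 0, hp.eventually_ne zero_ne_one]
    with x hx hkx hp_ne_one
  have hqx : (1 - p x : ℝ) ≠ 0 := sub_ne_zero.2 hp_ne_one.symm
  obtain ⟨hmx, hpx⟩ := mul_ne_zero_iff.1 hx
  rw [Pi.inv_apply]
  field_simp

theorem eventually_exp_le_map_cast_binomial_real_singleton
    (hmp : Tendsto (fun x => (m x * p x : ℝ)) l atTop)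
    (hp : Tendsto (fun x => (p x : ℝ)) l (𝓝 0)) (hH : 0 < H)
    (hk : Tendsto (fun x => (k x / (m x * p x) : ℝ)) l (𝓝 H)) {r : ℝ} (hr : klFun H < r) :
    ∀ᶠ x in l, exp (-(m x * p x * r)) ≤ Bin(ℝ, m x, p x).real {(k x : ℝ)} := by
  have hkp : Tendsto (fun x => k x / (m x * p x) * p x : α → ℝ) l (𝓝 0) := by
    simpa only [mul_zero] using hk.mul hp
  filter_upwards [hmp.eventually_gt_atTop 0, hp.eventually_lt_const one_pos,
    hk.eventually_const_lt hH, hkp.eventually_lt_const one_pos,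
    (tendsto_binomial_exponent_div hmp hp hH hk).eventually_const_lt (neg_lt_neg hr)]
    with x hmp0 hp1 hk0 hkp1 hexponent
  have hp0 : (0 : ℝ) < p x := pos_of_mul_pos_right hmp0 (m x).cast_nonneg
  have hkx : k x ≠ 0 := fun h => by simp [h] at hk0
  have hkm : k x < m x := by
    rw [div_mul_eq_mul_div, mul_div_mul_right _ _ hp0.ne',
      div_lt_one (pos_of_mul_pos_left hmp0 hp0.le)] at hkp1
    exact_mod_cast hkp1
  refine (exp_le_exp.2 ?_).trans (exp_le_map_cast_binomial_real_singleton hkx hkm hp0 hp1)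
  rw [lt_div_iff₀ hmp0] at hexponent
  linarith

end Asymptotics

section BinomialMinimum

variable {Ω : Type*} [MeasurableSpace Ω] {μ : Measure Ω} {m : ℕ} {p : unitInterval}

theorem integrable_of_hasLaw_map_cast_binomial {Y : Ω → ℝ} (hY : HasLaw Y Bin(ℝ, m, p) μ) :
    Integrable Y μ := by
  have hid : Integrable id (μ.map Y) := by rw [hY.map_eq]; exact integrable_map_cast_binomial id
  exact hid.comp_aemeasurable hY.aemeasurable

theorem ae_mem_Icc_of_hasLaw_map_cast_binomial {Y : Ω → ℝ} (hY : HasLaw Y Bin(ℝ, m, p) μ) :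
    ∀ᵐ ω ∂μ, Y ω ∈ Set.Icc (0 : ℝ) m :=
  (hY.ae_iff (p := (· ∈ Set.Icc (0 : ℝ) m)) measurableSet_Icc.mem).2
    (ae_map_cast_binomial_mem_Icc m p)

variable {ι : Type*} [Fintype ι] [Nonempty ι] [IsProbabilityMeasure μ] {X : ι → Ω → ℝ}

theorem mul_one_sub_card_mul_exp_le_integral_iInf (hX : ∀ i, HasLaw (X i) Bin(ℝ, m, p) μ)
    {H : ℝ} (hH0 : 0 < H) (hH1 : H ≤ 1) :
    H * (m * p) * (1 - Fintype.card ι * exp (-(m * p * klFun H))) ≤ ∫ ω, ⨅ i, X i ω ∂μ := by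
  have ht : 0 ≤ H * (m * p) := mul_nonneg hH0.le (mul_nonneg m.cast_nonneg p.2.1)
  refine le_trans ?_ (mul_one_sub_sum_le_integral_iInf
    (fun i => integrable_of_hasLaw_map_cast_binomial (hX i))
    (fun i => (ae_mem_Icc_of_hasLaw_map_cast_binomial (hX i)).mono fun ω hω => hω.1) ht)
  gcongr ?_ * (1 - ?_)
  rw [← Finset.card_univ, ← nsmul_eq_mul (Finset.card _)]
  refine Finset.sum_le_card_nsmul _ (fun i => μ.real {ω | X i ω ≤ H * (m * p)}) _ fun i _ => ?_
  rw [(hX i).measureReal_eq (p := (· ≤ H * (m * p))) measurableSet_Iic]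
  exact map_cast_binomial_real_Iic_le m p hH0 hH1

theorem NegativelyAssociated.integral_iInf_le_add_mul_pow (hNA : NegativelyAssociated μ X)
    (hX : ∀ i, HasLaw (X i) Bin(ℝ, m, p) μ) {k : ℕ} {t : ℝ} (hk : k ≤ t) :
    ∫ ω, ⨅ i, X i ω ∂μ ≤
      t + m * p * (1 - Bin(ℝ, m, p).real {(k : ℝ)}) ^ (Fintype.card ι - 1) := by
  classical
  let a := Classical.arbitrary ι
  have hmean : ∫ ω, X a ω ∂μ = m * p :=
    (hX a).integral_eq.trans (integral_id_map_cast_binomial m p)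
  refine (hNA.integral_iInf_le (fun i => integrable_of_hasLaw_map_cast_binomial (hX i)) a
    (ae_mem_Icc_of_hasLaw_map_cast_binomial (hX a)) (k.cast_nonneg.trans hk)).trans ?_
  rw [hmean, ← Finset.card_univ, ← Finset.card_erase_of_mem (Finset.mem_univ a)]
  gcongr
  · exact mul_nonneg m.cast_nonneg p.2.1
  · rw [← Finset.prod_const]
    refine Finset.prod_le_prod (fun i _ => measureReal_nonneg) fun i _ => ?_
    rw [(hX i).measureReal_eq (p := (t < ·)) measurableSet_Ioi]
    exact map_cast_binomial_real_Ioi_le hk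

end BinomialMinimum

section CriticalZone

theorem strictAntiOn_klFun : StrictAntiOn klFun (Set.Icc 0 1) := by
  refine strictAntiOn_of_deriv_neg (convex_Icc 0 1) continuous_klFun.continuousOn fun x hx => ?_
  rw [interior_Icc] at hx
  rw [deriv_klFun]
  exact log_neg hx.1 hx.2

theorem tendsto_one_sub_pow_pred {q : ℕ → ℝ} (hq : ∀ n, q n ∈ Set.Icc 0 1)
    (hnq : Tendsto (fun n => n * q n) atTop atTop) :
    Tendsto (fun n => (1 - q n) ^ (n - 1)) atTop (𝓝 0) := by
  have hexp : Tendsto (fun n => exp (1 - n * q n)) atTop (𝓝 0) :=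
    tendsto_exp_atBot.comp (tendsto_atBot_add_const_left _ 1 (tendsto_neg_atTop_atBot.comp hnq))
  refine squeeze_zero (fun n => pow_nonneg (sub_nonneg.2 (hq n).2) _) (fun n => ?_) hexp
  have hn : (n : ℝ) - 1 ≤ (n - 1 : ℕ) := by
    rw [sub_le_iff_le_add]
    exact_mod_cast le_tsub_add
  calc (1 - q n) ^ (n - 1) ≤ exp (-q n) ^ (n - 1) :=
        pow_le_pow_left₀ (sub_nonneg.2 (hq n).2) (one_sub_le_exp_neg _) _
    _ = exp ((n - 1 : ℕ) * -q n) := (exp_nat_mul _ _).symm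
    _ ≤ exp (1 - n * q n) := exp_le_exp.2 (by nlinarith [(hq n).1, (hq n).2])

theorem tendsto_log_natCast_atTop : Tendsto (fun n : ℕ => log n) atTop atTop :=
  tendsto_log_atTop.comp tendsto_natCast_atTop_atTop

variable {M : ℕ → ℝ} {c r : ℝ}

theorem natCast_mul_exp_neg_eventuallyEq (M : ℕ → ℝ) (r : ℝ) :
    (fun n => n * exp (-(M n * r))) =ᶠ[atTop]
      fun n => exp (log n * (1 - M n / log n * r)) := by
  filter_upwards [eventually_gt_atTop 0, tendsto_log_natCast_atTop.eventually_ne_atTop 0]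
    with n hn hlog
  rw [← exp_log (Nat.cast_pos.2 hn : (0 : ℝ) < n), ← exp_add, log_exp]
  congr 1
  field_simp
  ring

theorem tendsto_natCast_mul_exp_neg_zero (hM : Tendsto (fun n => M n / log n) atTop (𝓝 c))
    (hr : 1 < c * r) : Tendsto (fun n => n * exp (-(M n * r))) atTop (𝓝 0) :=
  (tendsto_exp_atBot.comp (tendsto_log_natCast_atTop.atTop_mul_neg (sub_neg.2 hr)
    ((hM.mul_const r).const_sub 1))).congr' (natCast_mul_exp_neg_eventuallyEq M r).symm

theorem tendsto_natCast_mul_exp_neg_atTop (hM : Tendsto (fun n => M n / log n) atTop (𝓝 c))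
    (hr : c * r < 1) : Tendsto (fun n => n * exp (-(M n * r))) atTop atTop :=
  (tendsto_exp_atTop.comp (tendsto_log_natCast_atTop.atTop_mul_pos (sub_pos.2 hr)
    ((hM.mul_const r).const_sub 1))).congr' (natCast_mul_exp_neg_eventuallyEq M r).symm

variable {m : ℕ → ℕ} {p : ℕ → unitInterval} {Ω : ℕ → Type*} [∀ n, MeasurableSpace (Ω n)]
  {μ : ∀ n, Measure (Ω n)} [∀ n, IsProbabilityMeasure (μ n)] {X : ∀ n, Fin n → Ω n → ℝ} {H a : ℝ}

theorem eventually_lt_integral_iInf_div_log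
    (hX : ∀ n j, HasLaw (X n j) Bin(ℝ, m n, p n) (μ n))
    (hmp : Tendsto (fun n => (m n * p n / log n : ℝ)) atTop (𝓝 c))
    (hH0 : 0 < H) (hH1 : H ≤ 1) (hH : 1 < c * klFun H) (ha : a < c * H) :
    ∀ᶠ n in atTop, a < (∫ ω, ⨅ j, X n j ω ∂μ n) / log n := by
  have hlim : Tendsto (fun n => (m n * p n / log n : ℝ) * H *
      (1 - n * exp (-(m n * p n * klFun H)))) atTop (𝓝 (c * H)) := by
    simpa using (hmp.mul_const H).mul ((tendsto_natCast_mul_exp_neg_zero hmp hH).const_sub 1)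
  filter_upwards [hlim.eventually_const_lt ha, eventually_ge_atTop 1,
    tendsto_log_natCast_atTop.eventually_gt_atTop 0] with n hlt hn hlog
  have : Nonempty (Fin n) := Fin.pos_iff_nonempty.1 hn
  have hbound := mul_one_sub_card_mul_exp_le_integral_iInf (hX n) hH0 hH1
  rw [Fintype.card_fin] at hbound
  refine hlt.trans_le ((le_div_iff₀ hlog).2 (hbound.trans_eq' ?_))
  field_simp

theorem eventually_integral_iInf_div_log_lt (hNA : ∀ n, NegativelyAssociated (μ n) (X n))
    (hX : ∀ n j, HasLaw (X n j) Bin(ℝ, m n, p n) (μ n)) (hc : 0 < c)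
    (hmp : Tendsto (fun n => (m n * p n / log n : ℝ)) atTop (𝓝 c))
    (hp : Tendsto (fun n => (p n : ℝ)) atTop (𝓝 0))
    (hH0 : 0 < H) (hH : klFun H < 1 / c) (ha : c * H < a) :
    ∀ᶠ n in atTop, (∫ ω, ⨅ j, X n j ω ∂μ n) / log n < a := by
  obtain ⟨r, hHr, hrc⟩ := exists_between hH
  have hmp_atTop : Tendsto (fun n => (m n * p n : ℝ)) atTop atTop := by
    refine (hmp.pos_mul_atTop hc tendsto_log_natCast_atTop).congr' ?_
    filter_upwards [tendsto_log_natCast_atTop.eventually_ne_atTop 0] with n hn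
      using div_mul_cancel₀ _ hn
  let k : ℕ → ℕ := fun n => ⌊H * (m n * p n)⌋₊
  have hk : Tendsto (fun n => (k n / (m n * p n) : ℝ)) atTop (𝓝 H) :=
    (tendsto_nat_floor_mul_div_atTop hH0.le).comp hmp_atTop
  have hnq : Tendsto (fun n => n * Bin(ℝ, m n, p n).real {(k n : ℝ)}) atTop atTop := by
    refine tendsto_atTop_mono' _ ?_ (tendsto_natCast_mul_exp_neg_atTop hmp
      ((lt_div_iff₀' hc).1 hrc))
    filter_upwards [eventually_exp_le_map_cast_binomial_real_singleton hmp_atTop hp hH0 hk hHr]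
      with n hn using mul_le_mul_of_nonneg_left hn n.cast_nonneg
  have hlim : Tendsto (fun n => (m n * p n / log n : ℝ) *
      (H + (1 - Bin(ℝ, m n, p n).real {(k n : ℝ)}) ^ (n - 1))) atTop (𝓝 (c * H)) := by
    simpa using hmp.mul ((tendsto_one_sub_pow_pred
      (fun n => ⟨measureReal_nonneg, measureReal_le_one⟩) hnq).const_add H)
  filter_upwards [hlim.eventually_lt_const ha, eventually_ge_atTop 1,
    tendsto_log_natCast_atTop.eventually_gt_atTop 0] with n hlt hn hlog
  have : Nonempty (Fin n) := Fin.pos_iff_nonempty.1 hn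
  have hbound := (hNA n).integral_iInf_le_add_mul_pow (hX n) (k := k n)
    (Nat.floor_le (mul_nonneg hH0.le (mul_nonneg (m n).cast_nonneg (p n).2.1)))
  rw [Fintype.card_fin] at hbound
  refine ((div_le_iff₀ hlog).2 (hbound.trans_eq ?_)).trans_lt hlt
  field_simp

theorem tendsto_integral_iInf_div_log (hNA : ∀ n, NegativelyAssociated (μ n) (X n))
    (hX : ∀ n j, HasLaw (X n j) Bin(ℝ, m n, p n) (μ n))
    (hmp : Tendsto (fun n => (m n * p n / log n : ℝ)) atTop (𝓝 c))
    (hp : Tendsto (fun n => (p n : ℝ)) atTop (𝓝 0))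
    (hH0 : 0 < H) (hH1 : H < 1) (hH : klFun H = 1 / c) :
    Tendsto (fun n => (∫ ω, ⨅ j, X n j ω ∂μ n) / log n) atTop (𝓝 (c * H)) := by
  have hc : 0 < c := one_div_pos.1 (hH ▸ (klFun_nonneg hH0.le).lt_of_ne'
    ((klFun_eq_zero_iff hH0.le).not.2 hH1.ne))
  have hcont : Tendsto (fun x => c * x) (𝓝 H) (𝓝 (c * H)) := tendsto_id.const_mul c
  refine tendsto_order.2 ⟨fun a ha => ?_, fun a ha => ?_⟩
  · obtain ⟨x, hax, hx0, hxH⟩ := (((hcont.mono_left nhdsWithin_le_nhds).eventually_const_lt ha).and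
      (Ioo_mem_nhdsLT hH0)).exists
    refine eventually_lt_integral_iInf_div_log hX hmp hx0 (hxH.trans hH1).le ?_ hax
    rw [← div_lt_iff₀' hc, ← hH]
    exact strictAntiOn_klFun ⟨hx0.le, (hxH.trans hH1).le⟩ ⟨hH0.le, hH1.le⟩ hxH
  · obtain ⟨x, hxa, hHx, hx1⟩ := (((hcont.mono_left nhdsWithin_le_nhds).eventually_lt_const ha).and
      (Ioo_mem_nhdsGT hH1)).exists
    refine eventually_integral_iInf_div_log_lt hNA hX hc hmp hp (hH0.trans hHx) ?_ hxa
    rw [← hH]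
    exact strictAntiOn_klFun ⟨hH0.le, hH1.le⟩ ⟨(hH0.trans hHx).le, hx1.le⟩ hHx

theorem expected_min_NA_binomial_critical_general (hNA : ∀ n, NegativelyAssociated (μ n) (X n))
    (hX : ∀ n j, HasLaw (X n j) Bin(ℝ, m n, p n) (μ n))
    (hmp : Tendsto (fun n => (m n * p n / log n : ℝ)) atTop (𝓝 c))
    (hp : Tendsto (fun n => (p n : ℝ)) atTop (𝓝 0))
    (hH0 : 0 < H) (hH1 : H < 1) (hH : klFun H = 1 / c) :
    Tendsto (fun n => (∫ ω, ⨅ j, X n j ω ∂μ n) / (c * H * log n)) atTop (𝓝 1) := by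
  have hc : c ≠ 0 := fun h => hH1.ne ((klFun_eq_zero_iff hH0.le).1 (by rw [hH, h, div_zero]))
  have hlim := (tendsto_integral_iInf_div_log hNA hX hmp hp hH0 hH1 hH).div_const (c * H)
  simpa only [div_div, mul_comm (log _), div_self (mul_ne_zero hc hH0.ne')] using hlim

end CriticalZone

end

/-- **Critical zone for negatively associated binomial minima.**  If for each `n` the
variables `X^{(n)}_1, …, X^{(n)}_n` are negatively associated, each `B(m(n), p(n))`,
with `m(n) p(n) / log n → c > 1` and `p(n) log n → 0`, and `H̃* ∈ (0,1)` is the unique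
solution of `H log H - (H-1) = 1/c`, then `E[min_j X^{(n)}_j] = c H̃* log n (1 + o(1))`. -/
theorem expected_min_NA_binomial_critical (m : ℕ → ℕ) (p : ℕ → ℝ)
    (hp : ∀ n, p n ∈ Set.Ioo (0 : ℝ) 1)
    (Ω : ℕ → Type*) [mΩ : ∀ n, MeasurableSpace (Ω n)] (μ : ∀ n, Measure (Ω n))
    [hμ : ∀ n, IsProbabilityMeasure (μ n)]
    (X : ∀ n, Fin n → Ω n → ℝ)
    (hmeas : ∀ n (j : Fin n), Measurable (X n j))
    (hNA : ∀ n, NegativelyAssociated (μ n) (X n))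
    (hlaw : ∀ n (j : Fin n), Measure.map (X n j) (μ n) = binomialMeasure (m n) (p n))
    (c : ℝ) (hc : 1 < c)
    (hmp : Tendsto (fun n : ℕ => (m n : ℝ) * p n / Real.log n) atTop (nhds c))
    (hplog : Tendsto (fun n : ℕ => p n * Real.log n) atTop (nhds 0))
    (Hstar : ℝ) (hH0 : 0 < Hstar) (hH1 : Hstar < 1)
    (hHeq : Hstar * Real.log Hstar - (Hstar - 1) = 1 / c)
    (hHuniq : ∀ H : ℝ, 0 < H → H < 1 → H * Real.log H - (H - 1) = 1 / c → H = Hstar) :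
    Tendsto (fun n : ℕ => (∫ ω, (⨅ j : Fin n, X n j ω) ∂(μ n)) / (c * Hstar * Real.log n))
      atTop (nhds 1) := by
  refine expected_min_NA_binomial_critical_general hNA
    (fun n j => ⟨(hmeas n j).aemeasurable,
      (hlaw n j).trans (binomialMeasure_eq_map_binomial _ (Set.Ioo_subset_Icc_self (hp n)))⟩)
    hmp (tendsto_zero_of_tendsto_mul_atTop hplog tendsto_log_natCast_atTop) hH0 hH1 ?_
  rw [← hHeq, InformationTheory.klFun_apply]
  ring

end
end
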